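/- arXiv:1810.01303 — 2 statements merged into one kernel-verified Lean document; each statement's English description precedes it below -/
import Mathlib

section
/- Let f and g be monic polynomials in F_q[T] with deg f ≤ n−1 and deg g ≤ n−1. Then Σ_{χ ∈ S_{n,q}} χ(f) · conj(χ(g)) equals q^n − q^{n−1} if f · T^{deg g} = g · T^{deg f} (i.e. if f/g is an integer power of T), and equals 0 otherwise. -/
open Polynomial

noncomputable section

/-- The ring `F_q[x]/(x^(n+1))`. -/
abbrev QuotR (F : Type) [Field F] (n : ℕ) : Type :=
  Polynomial F ⧸ Ideal.span {(Polynomial.X : Polynomial F) ^ (n + 1)}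

/-- The quotient map `F_q[x] → F_q[x]/(x^(n+1))`. -/
def mkR (F : Type) [Field F] (n : ℕ) : Polynomial F →+* QuotR F n :=
  Ideal.Quotient.mk _

/-- A Dirichlet character modulo `x^(n+1)` is even if it is trivial on the constants. -/
def IsEvenChar (F : Type) [Field F] (n : ℕ) (ψ : MulChar (QuotR F n) ℂ) : Prop :=
  ∀ c : F, c ≠ 0 → ψ (mkR F n (Polynomial.C c)) = 1

/-- A Dirichlet character modulo `x^(n+1)` is primitive if it is nontrivial on the
units congruent to `1` modulo `x^n` (which are exactly the `1 + a x^n`). -/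
def IsPrimitiveChar (F : Type) [Field F] (n : ℕ) (ψ : MulChar (QuotR F n) ℂ) : Prop :=
  ∃ a : F, ψ (mkR F n (1 + Polynomial.C a * Polynomial.X ^ n)) ≠ 1

/-- The function `χ` on (monic) polynomials attached to a Dirichlet character `ψ`:
`χ(f) = ψ(f(x⁻¹) x^(deg f) mod x^(n+1))`. -/
def attachedChar (F : Type) [Field F] (n : ℕ) (ψ : MulChar (QuotR F n) ℂ) :
    Polynomial F → ℂ :=
  fun f => ψ (mkR F n f.reverse)

/-- The family `S_{n,q}` of functions attached to primitive even Dirichlet characters. -/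
def Snq (F : Type) [Field F] (n : ℕ) : Set (Polynomial F → ℂ) :=
  {χ | ∃ ψ : MulChar (QuotR F n) ℂ,
    IsEvenChar F n ψ ∧ IsPrimitiveChar F n ψ ∧ χ = attachedChar F n ψ}

/-- The sum of `χ(f)` over monic polynomials of degree `d`. -/
def coeffSum (F : Type) [Field F] (χ : Polynomial F → ℂ) (d : ℕ) : ℂ :=
  ∑ᶠ f ∈ {f : Polynomial F | f.Monic ∧ f.natDegree = d}, χ f

/-- `λ_d(χ) = q^(-d/2) ∑_{f monic, deg f = d} χ(f)`. -/
def lam (F : Type) [Field F] [Fintype F] (χ : Polynomial F → ℂ) (d : ℕ) : ℂ :=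
  ((((Fintype.card F : ℝ) ^ (-(d : ℝ) / 2) : ℝ)) : ℂ) * coeffSum F χ d

/-- The epsilon factor `ε_χ = λ_{n-1}(χ)`. -/
def epsFactor (F : Type) [Field F] [Fintype F] (n : ℕ) (χ : Polynomial F → ℂ) : ℂ :=
  lam F χ (n - 1)

/-- The L-function `L(s,χ) = ∑_{d=0}^{n-1} λ_d(χ) q^(d(1/2-s))`. -/
def Lfun (F : Type) [Field F] [Fintype F] (n : ℕ) (χ : Polynomial F → ℂ) (s : ℂ) : ℂ :=
  ∑ d ∈ Finset.range n, lam F χ d * (Fintype.card F : ℂ) ^ ((d : ℂ) * (1 / 2 - s))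

namespace St2

variable {F : Type} [Field F] {n : ℕ}

theorem mk_eq_iff (a b : Polynomial F) : mkR F n a = mkR F n b ↔ ∀ d < n + 1, a.coeff d = b.coeff d := by
  unfold mkR
  rw [Ideal.Quotient.mk_eq_mk_iff_sub_mem, Ideal.mem_span_singleton, Polynomial.X_pow_dvd_iff]
  simp [sub_eq_zero]

theorem mk_surj : Function.Surjective (mkR F n) := Ideal.Quotient.mk_surjective

/-- constant term -/
def ev (F : Type) [Field F] (n : ℕ) : QuotR F n →+* F :=
  Ideal.Quotient.lift _ (Polynomial.evalRingHom 0) (by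
    intro a ha
    rw [Ideal.mem_span_singleton, Polynomial.X_pow_dvd_iff] at ha
    simp [← Polynomial.coeff_zero_eq_eval_zero, ha 0 (Nat.succ_pos n)])

theorem ev_mk (a : Polynomial F) : ev F n (mkR F n a) = a.coeff 0 := by
  unfold ev mkR
  rw [Ideal.Quotient.lift_mk, Polynomial.coeff_zero_eq_eval_zero]; rfl

theorem isUnit_mk {a : Polynomial F} (h : a.coeff 0 ≠ 0) : IsUnit (mkR F n a) := by
  have h1 : IsCoprime a (X ^ (n + 1)) := by
    apply IsCoprime.pow_right
    refine IsCoprime.symm ((Polynomial.irreducible_X.coprime_iff_not_dvd).2 ?_)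
    rwa [Polynomial.X_dvd_iff]
  obtain ⟨u, v, huv⟩ := h1
  refine IsUnit.of_mul_eq_one (mkR F n u) ?_
  rw [← map_mul, ← map_one (mkR F n), mul_comm]
  have : u * a = 1 - v * X ^ (n + 1) := by rw [← huv]; ring
  rw [this, map_sub, sub_eq_self]
  unfold mkR
  rw [Ideal.Quotient.eq_zero_iff_mem, Ideal.mem_span_singleton]
  exact Dvd.intro_left v rfl

theorem isUnit_iff (r : QuotR F n) : IsUnit r ↔ ev F n r ≠ 0 := by
  constructor
  · intro h; exact (h.map (ev F n)).ne_zero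
  · obtain ⟨a, rfl⟩ := mk_surj r
    rw [ev_mk]; exact isUnit_mk

theorem ev_surj : Function.Surjective (ev F n) := fun c => ⟨mkR F n (C c), by simp [ev_mk]⟩

theorem finiteR [Fintype F] : Finite (QuotR F n) := by
  have : Module.Finite F (QuotR F n) :=
    Polynomial.Monic.finite_quotient (Polynomial.monic_X_pow (n + 1))
  exact Module.finite_of_finite F

theorem card_R [Fintype F] : Nat.card (QuotR F n) = Fintype.card F ^ (n + 1) := by
  have := finiteR (F := F) (n := n)
  have : Module.Finite F (QuotR F n) :=
    Polynomial.Monic.finite_quotient (Polynomial.monic_X_pow (n + 1))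
  rw [Module.natCard_eq_pow_finrank (K := F), finrank_quotient_span_eq_natDegree]
  simp

theorem card_units [Fintype F] :
    Nat.card (QuotR F n)ˣ = (Fintype.card F - 1) * Fintype.card F ^ n := by
  classical
  have := finiteR (F := F) (n := n)
  have e : (QuotR F n)ˣ ≃ {r : QuotR F n // ¬ (ev F n r = 0)} :=
    Equiv.ofBijective (fun x => ⟨x, (isUnit_iff _).1 x.isUnit⟩) ⟨fun x y h => by
      simpa [Units.ext_iff] using h, fun r => by
      obtain ⟨x, hx⟩ := (isUnit_iff r.1).2 r.2
      exact ⟨x, Subtype.ext hx⟩⟩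
  have := Fintype.ofFinite (QuotR F n)
  have hq : 0 < Fintype.card F := Fintype.card_pos
  have hk : Nat.card {r : QuotR F n // ev F n r = 0} = Fintype.card F ^ n := by
    have h := AddSubgroup.card_eq_card_quotient_mul_card_addSubgroup (ev F n : QuotR F n →+ F).ker
    rw [Nat.card_congr (QuotientAddGroup.quotientKerEquivOfSurjective (ev F n : QuotR F n →+ F)
      ev_surj).toEquiv, card_R, pow_succ', Nat.card_eq_fintype_card] at h
    exact (Nat.eq_of_mul_eq_mul_left hq h).symm
  rw [Nat.card_congr e, Nat.card_eq_fintype_card, Fintype.card_subtype_compl,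
    ← Nat.card_eq_fintype_card, ← Nat.card_eq_fintype_card, hk, card_R, Nat.sub_mul, pow_succ', one_mul]

theorem reverse_reverse' {a : Polynomial F} (h : a.coeff 0 ≠ 0) : a.reverse.reverse = a := by
  have h0 : a.natTrailingDegree = 0 := by
    rw [Polynomial.natTrailingDegree_eq_zero]; exact Or.inr h
  have := Polynomial.reverse_natDegree a
  rw [h0, Nat.sub_zero] at this
  unfold Polynomial.reverse at this ⊢
  rw [this]; simp

theorem attached_inj : Function.Injective (attachedChar F n) := by
  intro ψ φ h
  apply MulChar.ext'
  intro r
  by_cases hr : IsUnit r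
  · obtain ⟨a, rfl⟩ := mk_surj r
    rw [isUnit_iff, ev_mk] at hr
    have := congrFun h a.reverse
    simpa [attachedChar, reverse_reverse' hr] using this
  · rw [MulChar.map_nonunit _ hr, MulChar.map_nonunit _ hr]

theorem rev_eq_iff {f g : Polynomial F} (hf : f.Monic) (hg : g.Monic) :
    f * X ^ g.natDegree = g * X ^ f.natDegree ↔ f.reverse = g.reverse := by
  constructor
  · intro h
    have := congrArg Polynomial.reverse h
    rwa [Polynomial.reverse_mul_X_pow, Polynomial.reverse_mul_X_pow] at this
  · intro h
    rw [← Polynomial.reverse_mul_X_pow f g.natDegree, ← Polynomial.reverse_mul_X_pow g f.natDegree] at h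
    have d1 : (f * X ^ g.natDegree).natDegree = f.natDegree + g.natDegree := by
      rw [hf.natDegree_mul (Polynomial.monic_X_pow _), Polynomial.natDegree_X_pow]
    have d2 : (g * X ^ f.natDegree).natDegree = f.natDegree + g.natDegree := by
      rw [hg.natDegree_mul (Polynomial.monic_X_pow _), Polynomial.natDegree_X_pow, add_comm]
    unfold Polynomial.reverse at h
    rw [d1, d2] at h
    have := congrArg (Polynomial.reflect (f.natDegree + g.natDegree)) h
    rwa [Polynomial.reflect_reflect, Polynomial.reflect_reflect] at this

open Classical in
theorem sum_even [Fintype F] (ψ : MulChar (QuotR F n) ℂ) :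
    ∑ c : Fˣ, ψ (mkR F n (C (c : F))) =
      if IsEvenChar F n ψ then ((Fintype.card F : ℂ) - 1) else 0 := by
  let h : Fˣ →* ℂ := (ψ : QuotR F n →* ℂ).comp
    (((mkR F n).comp C : F →* QuotR F n).comp (Units.coeHom F))
  have hv : ∀ c : Fˣ, h c = ψ (mkR F n (C (c : F))) := fun c => rfl
  have key := sum_hom_units h
  simp only [hv] at key
  have hi : h = 1 ↔ IsEvenChar F n ψ := by
    constructor
    · intro e c hc
      have := DFunLike.congr_fun e (Units.mk0 c hc)
      simpa [hv] using this
    · intro e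
      ext c
      simp [hv, e c c.ne_zero]
  rw [key]
  simp only [hi]
  have : 1 ≤ Fintype.card F := Fintype.card_pos
  rw [Fintype.card_units]
  split_ifs <;> push_cast [Nat.cast_sub this] <;> simp

theorem mul_one_add (hn : 1 ≤ n) (a b : F) :
    mkR F n (1 + C (a + b) * X ^ n) = mkR F n (1 + C a * X ^ n) * mkR F n (1 + C b * X ^ n) := by
  rw [← map_mul]
  have : (1 + C a * X ^ n) * (1 + C b * X ^ n) =
      (1 + C (a + b) * X ^ n) + X ^ (n + 1) * (C (a * b) * X ^ (n - 1)) := by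
    have : (X : F[X]) ^ (n + 1) * X ^ (n - 1) = X ^ n * X ^ n := by
      rw [← pow_add, ← pow_add]; congr 1; omega
    simp only [map_add, map_mul]
    linear_combination (- C a * C b) * this
  rw [this, map_add _ (1 + C (a + b) * X ^ n), eq_comm, add_eq_left]
  unfold mkR
  rw [Ideal.Quotient.eq_zero_iff_mem, Ideal.mem_span_singleton]
  exact Dvd.intro _ rfl

open Classical in
theorem sum_prim [Fintype F] (hn : 1 ≤ n) (ψ : MulChar (QuotR F n) ℂ) :
    ∑ a : F, ψ (mkR F n (1 + C a * X ^ n)) =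
      if IsPrimitiveChar F n ψ then 0 else (Fintype.card F : ℂ) := by
  let h : Multiplicative F →* ℂ :=
    { toFun := fun a => ψ (mkR F n (1 + C a.toAdd * X ^ n))
      map_one' := by simp
      map_mul' := fun a b => by rw [toAdd_mul, mul_one_add hn, map_mul] }
  have hv : ∀ c : F, h (Multiplicative.ofAdd c) = ψ (mkR F n (1 + C (c : F) * X ^ n)) :=
    fun c => rfl
  have key := sum_hom_units h
  have hi : h = 1 ↔ ¬ IsPrimitiveChar F n ψ := by
    unfold IsPrimitiveChar
    push Not
    constructor
    · intro e c
      have := DFunLike.congr_fun e (Multiplicative.ofAdd c)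
      simpa [hv] using this
    · intro e
      refine MonoidHom.ext fun c => ?_
      exact e c.toAdd
  have e1 : ∑ g : Multiplicative F, h g = ∑ a : F, ψ (mkR F n (1 + C a * X ^ n)) :=
    Fintype.sum_equiv Multiplicative.toAdd _ _ fun _ => rfl
  rw [← e1, key]
  simp only [hi]
  split_ifs <;> simp

theorem sum_all [Fintype F] [Fintype (MulChar (QuotR F n) ℂ)] [DecidableEq (QuotR F n)] (r : QuotR F n) :
    ∑ ψ : MulChar (QuotR F n) ℂ, ψ r =
      if r = 1 then ((Fintype.card F : ℂ) - 1) * (Fintype.card F : ℂ) ^ n else 0 := by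
  have := finiteR (F := F) (n := n)
  have h1q : 1 ≤ Fintype.card F := Fintype.card_pos
  have : NeZero (Monoid.exponent (QuotR F n)ˣ) := ⟨Monoid.exponent_ne_zero_of_finite⟩
  split_ifs with ha
  · simp only [ha, map_one, Finset.sum_const, Finset.card_univ, nsmul_eq_mul, mul_one,
      ← Nat.card_eq_fintype_card (α := MulChar (QuotR F n) ℂ)]
    rw [MulChar.card_eq_card_units_of_hasEnoughRootsOfUnity, card_units]
    push_cast [Nat.cast_sub h1q]; simp
  · obtain ⟨χ, hχ⟩ := MulChar.exists_apply_ne_one_of_hasEnoughRootsOfUnity (QuotR F n) ℂ ha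
    refine eq_zero_of_mul_eq_self_left hχ ?_
    simp only [Finset.mul_sum, ← MulChar.mul_apply]
    exact Fintype.sum_bijective _ (Group.mulLeft_bijective χ) _ _ fun χ' ↦ rfl

theorem key_eq (hn : 1 ≤ n) {A B : F[X]} (hA : A.coeff 0 = 1) (hB : B.coeff 0 = 1)
    (dA : A.natDegree ≤ n - 1) (dB : B.natDegree ≤ n - 1) (c a : F)
    (h : mkR F n (C c) * mkR F n (1 + C a * X ^ n) * mkR F n A = mkR F n B) :
    c = 1 ∧ a = 0 ∧ A = B := by
  rw [← map_mul, ← map_mul, mk_eq_iff] at h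
  have hc : ∀ d, (C c * (1 + C a * X ^ n) * A).coeff d =
      c * (A.coeff d + a * if n ≤ d then A.coeff (d - n) else 0) := by
    intro d
    have : C c * (1 + C a * X ^ n) * A = C c * (A + C a * (A * X ^ n)) := by ring
    rw [this, coeff_C_mul, coeff_add, coeff_C_mul, coeff_mul_X_pow']
  simp only [hc] at h
  have h0 := h 0 (by omega)
  have : ¬ n ≤ 0 := by omega
  have c1 : c = 1 := by simpa [this, hA, hB] using h0
  subst c1
  have zA : ∀ d, n ≤ d → A.coeff d = 0 := fun d hd => coeff_eq_zero_of_natDegree_lt (by omega)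
  have zB : ∀ d, n ≤ d → B.coeff d = 0 := fun d hd => coeff_eq_zero_of_natDegree_lt (by omega)
  refine ⟨rfl, ?_, ?_⟩
  · have := h n (by omega)
    simpa [zA n le_rfl, zB n le_rfl, hA] using this
  · ext d
    by_cases hd : n ≤ d
    · rw [zA d hd, zB d hd]
    · have := h d (by omega)
      simpa [hd] using this

theorem conj_apply {ψ : MulChar (QuotR F n) ℂ} [Fintype F] (b : (QuotR F n)ˣ) :
    (starRingEnd ℂ) (ψ (b : QuotR F n)) = ψ ((b⁻¹ : (QuotR F n)ˣ) : QuotR F n) := by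
  have := finiteR (F := F) (n := n)
  have := MulChar.star_apply' ψ (b : QuotR F n)
  rw [MulChar.inv_apply, Ring.inverse_unit] at this
  exact this

open Classical in
theorem main_sum [Fintype F] (hn : 1 ≤ n) {A B : F[X]} (hA : A.coeff 0 = 1) (hB : B.coeff 0 = 1)
    (dA : A.natDegree ≤ n - 1) (dB : B.natDegree ≤ n - 1) [Fintype (MulChar (QuotR F n) ℂ)] :
    ∑ ψ : MulChar (QuotR F n) ℂ, (if IsEvenChar F n ψ ∧ IsPrimitiveChar F n ψ then
      ψ (mkR F n A) * (starRingEnd ℂ) (ψ (mkR F n B)) else 0) =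
    if A = B then (Fintype.card F : ℂ) ^ n - (Fintype.card F : ℂ) ^ (n - 1) else 0 := by
  obtain ⟨b, hb⟩ : IsUnit (mkR F n B) := isUnit_mk (by rw [hB]; exact one_ne_zero)
  set u : QuotR F n := mkR F n A * ((b⁻¹ : (QuotR F n)ˣ) : QuotR F n) with hu
  have hq0 : (Fintype.card F : ℂ) ≠ 0 := by
    exact_mod_cast Fintype.card_ne_zero
  have hq1 : (Fintype.card F : ℂ) - 1 ≠ 0 := by
    rw [sub_ne_zero]
    exact_mod_cast Fintype.one_lt_card.ne'
  set q : ℂ := (Fintype.card F : ℂ) with hq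
  have hu1 : ∀ r : QuotR F n, r * u = 1 ↔ r * mkR F n A = mkR F n B := by
    intro r
    rw [hu, ← mul_assoc, Units.mul_inv_eq_one, hb]
  have step : ∀ ψ : MulChar (QuotR F n) ℂ, (if IsEvenChar F n ψ ∧ IsPrimitiveChar F n ψ then
      ψ (mkR F n A) * (starRingEnd ℂ) (ψ (mkR F n B)) else 0) =
      ∑ c : Fˣ, ((q - 1)⁻¹ * ψ (mkR F n (C (c : F)) * mkR F n (1 + C 0 * X ^ n) * u) -
       ∑ a : F, ((q - 1)⁻¹ * q⁻¹) * ψ (mkR F n (C (c : F)) * mkR F n (1 + C a * X ^ n) * u)) := by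
    intro ψ
    have h1 := sum_even ψ
    have h2 := sum_prim hn ψ
    have e : (∑ c : Fˣ, ((q - 1)⁻¹ * ψ (mkR F n (C (c : F)) * mkR F n (1 + C 0 * X ^ n) * u) -
       ∑ a : F, ((q - 1)⁻¹ * q⁻¹) * ψ (mkR F n (C (c : F)) * mkR F n (1 + C a * X ^ n) * u)))
       = (q - 1)⁻¹ * (∑ c : Fˣ, ψ (mkR F n (C (c : F)))) *
         (1 - q⁻¹ * ∑ a : F, ψ (mkR F n (1 + C a * X ^ n))) * ψ u := by
      rw [Finset.mul_sum, Finset.sum_mul, Finset.sum_mul]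
      refine Finset.sum_congr rfl fun c _ => ?_
      simp only [map_mul ψ, map_zero, zero_mul, add_zero, map_one, mul_one]
      rw [← Finset.mul_sum, ← Finset.sum_mul, ← Finset.mul_sum]
      ring
    rw [e, h1, h2, ← hb, conj_apply, ← map_mul, ← hu]
    by_cases x : IsEvenChar F n ψ <;> by_cases y : IsPrimitiveChar F n ψ <;> simp [x, y, ← hq, hq0, hq1]
  rw [Finset.sum_congr rfl fun ψ _ => step ψ, Finset.sum_comm]
  have tot : ∀ (c : Fˣ) (a : F),
      ∑ ψ : MulChar (QuotR F n) ℂ, ψ (mkR F n (C (c : F)) * mkR F n (1 + C a * X ^ n) * u) =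
      if c = 1 ∧ a = 0 ∧ A = B then (q - 1) * q ^ n else 0 := by
    intro c a
    rw [sum_all]
    refine if_congr ?_ rfl rfl
    rw [hu1]
    constructor
    · intro h
      obtain ⟨h1, h2, h3⟩ := key_eq hn hA hB dA dB _ _ h
      exact ⟨Units.ext h1, h2, h3⟩
    · rintro ⟨rfl, rfl, rfl⟩
      simp
  have inner : ∀ c : Fˣ, (∑ ψ : MulChar (QuotR F n) ℂ,
      ((q - 1)⁻¹ * ψ (mkR F n (C (c : F)) * mkR F n (1 + C 0 * X ^ n) * u) -
       ∑ a : F, ((q - 1)⁻¹ * q⁻¹) * ψ (mkR F n (C (c : F)) * mkR F n (1 + C a * X ^ n) * u))) =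
      if c = 1 then (if A = B then q ^ n - q⁻¹ * q ^ n else 0) else 0 := by
    intro c
    rw [Finset.sum_sub_distrib, Finset.sum_comm (t := (Finset.univ : Finset F))]
    simp only [← Finset.mul_sum, tot]
    by_cases hc : c = 1 <;> by_cases hAB : A = B <;> simp [hc, hAB]
    field_simp
  rw [Finset.sum_congr rfl fun c _ => inner c]
  rw [Finset.sum_ite_eq' Finset.univ (1 : Fˣ)]
  simp only [Finset.mem_univ, if_true]
  refine if_congr Iff.rfl ?_ rfl
  obtain ⟨m, rfl⟩ : ∃ m, n = m + 1 := ⟨n - 1, by omega⟩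
  rw [Nat.add_sub_cancel, pow_succ']
  field_simp

open Classical in
theorem final [Fintype F] (hn : 1 ≤ n) (f g : F[X]) (hf : f.Monic) (hg : g.Monic)
    (hdf : f.natDegree ≤ n - 1) (hdg : g.natDegree ≤ n - 1) :
    (∑ᶠ χ ∈ Snq F n, χ f * (starRingEnd ℂ) (χ g)) =
      if f * X ^ g.natDegree = g * X ^ f.natDegree then
        (Fintype.card F : ℂ) ^ n - (Fintype.card F : ℂ) ^ (n - 1) else 0 := by
  have := finiteR (F := F) (n := n)
  have : Fintype (MulChar (QuotR F n) ℂ) := Fintype.ofFinite _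
  have hS : Snq F n = attachedChar F n '' {ψ | IsEvenChar F n ψ ∧ IsPrimitiveChar F n ψ} := by
    ext χ
    simp only [Snq, Set.mem_ofPred_eq, Set.mem_image]
    constructor
    · rintro ⟨ψ, h1, h2, rfl⟩; exact ⟨ψ, ⟨h1, h2⟩, rfl⟩
    · rintro ⟨ψ, ⟨h1, h2⟩, rfl⟩; exact ⟨ψ, h1, h2, rfl⟩
  rw [hS, finsum_mem_image attached_inj.injOn, finsum_mem_def, finsum_eq_sum_of_fintype]
  rw [if_congr (rev_eq_iff hf hg) rfl rfl]
  rw [← main_sum hn (by rw [coeff_zero_reverse]; exact hf) (by rw [coeff_zero_reverse]; exact hg)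
    ((Polynomial.reverse_natDegree_le f).trans hdf) ((Polynomial.reverse_natDegree_le g).trans hdg)]
  refine Finset.sum_congr rfl fun ψ _ => ?_
  rw [Set.indicator_apply]
  rfl

end St2

/-- orthogonality: for monic `f, g` of degree `≤ n-1`,
`∑_{χ ∈ S_{n,q}} χ(f) conj(χ(g))` is `q^n - q^(n-1)` when `f/g` is an integer power
of `T` (i.e. `f T^(deg g) = g T^(deg f)`), and `0` otherwise. -/
theorem statement2 (p : ℕ) (hp : p.Prime) (F : Type) [Field F] [Fintype F] (hchar : CharP F p)
    (n : ℕ) (hn : 1 ≤ n) (f g : Polynomial F) (hf : f.Monic) (hg : g.Monic)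
    (hdf : f.natDegree ≤ n - 1) (hdg : g.natDegree ≤ n - 1) :
    (f * Polynomial.X ^ g.natDegree = g * Polynomial.X ^ f.natDegree →
      (∑ᶠ χ ∈ Snq F n, χ f * (starRingEnd ℂ) (χ g)) =
        (Fintype.card F : ℂ) ^ n - (Fintype.card F : ℂ) ^ (n - 1)) ∧
    (f * Polynomial.X ^ g.natDegree ≠ g * Polynomial.X ^ f.natDegree →
      (∑ᶠ χ ∈ Snq F n, χ f * (starRingEnd ℂ) (χ g)) = 0) := by
  have h := St2.final hn f g hf hg hdf hdg
  classical
  exact ⟨fun e => by rw [h, if_pos e], fun e => by rw [h, if_neg e]⟩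

end
end

section
/- There exist constants C > 0 and K > 0 depending only on k such that the following holds for every prime power q ≥ 2, every subset S of {1,…,k} with S and S^c nonempty, and every d ∈ ℤ^k with Σ_{i∈S} d_i − Σ_{i∉S} d_i ≥ 0: |b(d)| ≤ C · (1 + Σ_{i∈S} d_i − Σ_{i∉S} d_i)^K · min( q^{(−max_{i∈S} d_i + min_{i∉S} d_i)/2}, q^{−(Σ_{i∈S} d_i)/2}, q^{(Σ_{i∉S} d_i)/2}, q^{−|Σ_{i∈S} d_i + Σ_{i∉S} d_i|/2} ). (Moreover b(d) = 0 when Σ_{i∈S} d_i − Σ_{i∉S} d_i < 0.) -/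
open Polynomial

noncomputable section

/-- `N_S(d)`: the number of `k`-tuples of monic polynomials over `F_q` with
`deg f_i = d_i` for `i ∈ S`, `deg f_i = -d_i` for `i ∉ S`, such that
`T^a ∏_{i∈S} f_i = T^b ∏_{i∉S} f_i` for some naturals `a, b`. -/
def NS (F : Type) [Field F] {k : ℕ} (S : Finset (Fin k)) (d : Fin k → ℤ) : ℕ :=
  Set.ncard {f : Fin k → Polynomial F |
    (∀ i, (f i).Monic) ∧
    (∀ i ∈ S, ((f i).natDegree : ℤ) = d i) ∧
    (∀ i ∉ S, ((f i).natDegree : ℤ) = -d i) ∧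
    ∃ a b : ℕ, Polynomial.X ^ a * ∏ i ∈ S, f i = Polynomial.X ^ b * ∏ i ∈ Sᶜ, f i}

/-- `w(d) = q^{-(∑_{i∈S} d_i - ∑_{i∉S} d_i)/2} N_S(d)`, the coefficient of
`∏ q^{α_i d_i}` in the diagonal sum. -/
def wS (F : Type) [Field F] [Fintype F] {k : ℕ} (S : Finset (Fin k)) (d : Fin k → ℤ) : ℝ :=
  (Fintype.card F : ℝ) ^ ((-((((∑ i ∈ S, d i) - ∑ i ∈ Sᶜ, d i : ℤ)) : ℝ)) / 2) * NS F S d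

/-- `c_S(d)`: the coefficient of `∏ q^{α_i d_i}` in `M_S`, i.e. in the Vandermonde
determinant times the diagonal sum. -/
def cS (F : Type) [Field F] [Fintype F] {k : ℕ} (S : Finset (Fin k)) (d : Fin k → ℤ) : ℝ :=
  (-1 : ℝ) ^ (k * (k - 1) / 2) *
    ∑ σ : Equiv.Perm (Fin k), ((Equiv.Perm.sign σ : ℤ) : ℝ) *
      wS F S (fun i => d i - ((σ i : ℕ) : ℤ))

/-- `v_J` for `J ⊆ S × Sᶜ`. -/
def vJ {k : ℕ} (S : Finset (Fin k)) (J : Finset (Fin k × Fin k)) (i : Fin k) : ℤ :=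
  if i ∈ S then ((J.filter fun p => p.1 = i).card : ℤ)
  else -(((J.filter fun p => p.2 = i).card : ℤ))

/-- `b(d) = ∑_{J ⊆ S×Sᶜ} (-1)^{|J|} w(d - v_J)`, the coefficient of `∏ q^{α_i d_i}`
in `∏_{i∈S, i'∈Sᶜ} (1 - q^{α_i - α_{i'}})` times the diagonal sum. -/
def bS (F : Type) [Field F] [Fintype F] {k : ℕ} (S : Finset (Fin k)) (d : Fin k → ℤ) : ℝ :=
  ∑ J ∈ (S ×ˢ Sᶜ).powerset, (-1 : ℝ) ^ J.card * wS F S (fun i => d i - vJ S J i)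


open Classical in
def cnt {F : Type} [Field F] (P f : F[X]) : ℕ :=
  (UniqueFactorizationMonoid.normalizedFactors f).count P

open UniqueFactorizationMonoid in
lemma cnt_mul {F : Type} [Field F] (P : F[X]) {f g : F[X]} (hf : f ≠ 0) (hg : g ≠ 0) :
    cnt P (f * g) = cnt P f + cnt P g := by
  classical
  simp [cnt, normalizedFactors_mul hf hg]

lemma cnt_one {F : Type} [Field F] (P : F[X]) : cnt P 1 = 0 := by
  simp [cnt]

lemma cnt_pow {F : Type} [Field F] (P : F[X]) (f : F[X]) (n : ℕ) :
    cnt P (f ^ n) = n * cnt P f := by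
  simp [cnt, UniqueFactorizationMonoid.normalizedFactors_pow]

lemma cnt_prod {F : Type} [Field F] {ι : Type} (P : F[X]) (s : Finset ι) (f : ι → F[X])
    (hf : ∀ i ∈ s, f i ≠ 0) : cnt P (∏ i ∈ s, f i) = ∑ i ∈ s, cnt P (f i) := by
  classical
  induction s using Finset.induction_on with
  | empty => simp [cnt_one]
  | insert a s ha ih =>
    rw [Finset.prod_insert ha, Finset.sum_insert ha, cnt_mul, ih]
    · intro i hi; exact hf i (Finset.mem_insert_of_mem hi)
    · exact hf a (Finset.mem_insert_self _ _)
    · rw [Finset.prod_ne_zero_iff]; intro i hi; exact hf i (Finset.mem_insert_of_mem hi)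

open Classical in
lemma cnt_irr {F : Type} [Field F] (P : F[X]) {Q : F[X]} (hQ : Irreducible Q) (hm : Q.Monic) :
    cnt P Q = if P = Q then 1 else 0 := by
  rw [cnt, UniqueFactorizationMonoid.normalizedFactors_irreducible hQ, hm.normalize_eq_self,
    Multiset.count_singleton]

lemma cnt_ne_zero {F : Type} [Field F] {P f : F[X]} (hf : f ≠ 0) (h : cnt P f ≠ 0) :
    P.Monic ∧ Irreducible P ∧ P.natDegree ≤ f.natDegree := by
  classical
  have hm : P ∈ UniqueFactorizationMonoid.normalizedFactors f := by
    rw [← Multiset.count_ne_zero]; exact h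
  have hi := UniqueFactorizationMonoid.irreducible_of_normalized_factor P hm
  refine ⟨?_, hi, ?_⟩
  · rw [← UniqueFactorizationMonoid.normalize_normalized_factor P hm]
    exact Polynomial.monic_normalize hi.ne_zero
  · exact Polynomial.natDegree_le_of_dvd
      (UniqueFactorizationMonoid.dvd_of_mem_normalizedFactors hm) hf

lemma finite_natDegree_le (F : Type) [Field F] [Fintype F] (M : ℕ) :
    {P : F[X] | P.natDegree ≤ M}.Finite := by
  have : Finite (Polynomial.degreeLT F (M+1)) :=
    Finite.of_equiv _ (Polynomial.degreeLTEquiv F (M+1)).symm.toEquiv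
  refine Set.Finite.subset (Set.toFinite (Polynomial.degreeLT F (M+1) : Set F[X])) ?_
  intro P hP
  simp only [Set.mem_ofPred_eq] at hP
  simp only [SetLike.mem_coe, Polynomial.mem_degreeLT]
  refine lt_of_le_of_lt Polynomial.degree_le_natDegree ?_
  exact_mod_cast Nat.lt_succ_of_le hP

lemma PM_finite (F : Type) [Field F] [Fintype F] (M : ℕ) :
    {P : F[X] | P.Monic ∧ Irreducible P ∧ P.natDegree ≤ M}.Finite :=
  (finite_natDegree_le F M).subset fun _ h => h.2.2

def PM (F : Type) [Field F] [Fintype F] (M : ℕ) : Finset F[X] := (PM_finite F M).toFinset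

lemma mem_PM {F : Type} [Field F] [Fintype F] {M : ℕ} {P : F[X]} :
    P ∈ PM F M ↔ P.Monic ∧ Irreducible P ∧ P.natDegree ≤ M := by
  simp [PM]

lemma monic_eq_prod {F : Type} [Field F] [Fintype F] {M : ℕ} {f : F[X]} (hf : f.Monic)
    (hd : f.natDegree ≤ M) : f = ∏ P ∈ PM F M, P ^ cnt P f := by
  classical
  have h1 := UniqueFactorizationMonoid.prod_normalizedFactors_eq hf.ne_zero
  rw [hf.normalize_eq_self] at h1
  conv_lhs => rw [← h1]
  rw [Finset.prod_multiset_count_of_subset _ (PM F M)]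
  · refine Finset.prod_congr rfl fun P _ => ?_
    rfl
  · intro P hP
    rw [Multiset.mem_toFinset] at hP
    have : cnt P f ≠ 0 := by
      unfold cnt
      rw [Multiset.count_ne_zero]; exact hP
    obtain ⟨a, b, c⟩ := cnt_ne_zero hf.ne_zero this
    exact mem_PM.2 ⟨a, b, c.trans hd⟩

lemma cnt_prod_pow {F : Type} [Field F] [Fintype F] {M : ℕ} (e : F[X] → ℕ) {P : F[X]}
    (hP : P ∈ PM F M) : cnt P (∏ Q ∈ PM F M, Q ^ e Q) = e P := by
  classical
  rw [cnt_prod]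
  · rw [Finset.sum_eq_single P]
    · have := mem_PM.1 hP
      rw [cnt_pow, cnt_irr P this.2.1 this.1]; simp
    · intro Q hQ hne
      have := mem_PM.1 hQ
      rw [cnt_pow, cnt_irr P this.2.1 this.1]; simp [hne.symm]
    · intro h; exact absurd hP h
  · intro Q hQ
    exact pow_ne_zero _ (mem_PM.1 hQ).1.ne_zero

lemma natDegree_prod_pow {F : Type} [Field F] [Fintype F] {M : ℕ} (e : F[X] → ℕ) :
    (∏ Q ∈ PM F M, Q ^ e Q).natDegree = ∑ Q ∈ PM F M, Q.natDegree * e Q := by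
  rw [Polynomial.natDegree_prod_of_monic]
  · refine Finset.sum_congr rfl fun Q hQ => ?_
    rw [(mem_PM.1 hQ).1.natDegree_pow, mul_comm]
  · intro Q hQ
    exact (mem_PM.1 hQ).1.pow _

open Classical in
def Ind {σ : Type} (A : Set (σ → ℕ)) (p : ℕ) : MvPowerSeries σ ℝ :=
  fun n => if ∃ a ∈ A, ∀ i, n i = p * a i then 1 else 0

open Classical in
lemma coeff_Ind {σ : Type} (A : Set (σ → ℕ)) (p : ℕ) (n : σ →₀ ℕ) :
    MvPowerSeries.coeff n (Ind A p) = if ∃ a ∈ A, ∀ i, n i = p * a i then 1 else 0 := rfl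

lemma euler {F : Type} [Field F] [Fintype F] {σ : Type} [Fintype σ]
    (A : F[X] → Set (σ → ℕ)) (n : σ →₀ ℕ) (M : ℕ) (hM : ∀ i, n i ≤ M) :
    MvPowerSeries.coeff n (∏ P ∈ PM F M, Ind (A P) P.natDegree) =
      (Set.ncard {f : σ → F[X] | (∀ i, (f i).Monic) ∧ (∀ i, (f i).natDegree = n i) ∧
        ∀ P ∈ PM F M, (fun i => cnt P (f i)) ∈ A P} : ℝ) := by
  classical
  rw [MvPowerSeries.coeff_prod]
  simp_rw [coeff_Ind, Finset.prod_boole]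
  rw [Finset.sum_boole]
  congr 1
  rw [← Set.ncard_coe_finset]
  symm
  have hpos : ∀ P ∈ PM F M, 0 < P.natDegree := fun P hP => (mem_PM.1 hP).2.1.natDegree_pos
  refine Set.ncard_congr (fun f _ => Finsupp.onFinset (PM F M)
    (fun P => if P ∈ PM F M then Finsupp.equivFunOnFinite.symm
      (fun i => P.natDegree * cnt P (f i)) else 0) ?_) ?_ ?_ ?_
  · intro P hP
    by_contra h
    simp [h] at hP
  · rintro f ⟨hf1, hf2, hf3⟩
    simp only [Finset.coe_filter, Set.mem_ofPred_eq, Finset.mem_finsuppAntidiag]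
    refine ⟨⟨?_, Finsupp.support_onFinset_subset⟩, ?_⟩
    · ext i
      rw [Finsupp.finsetSum_apply]
      rw [← hf2 i]
      conv_rhs => rw [monic_eq_prod (hf1 i) ((hf2 i).le.trans (hM i)), natDegree_prod_pow]
      refine Finset.sum_congr rfl fun P hP => ?_
      simp [hP]
    · intro P hP
      exact ⟨_, hf3 P hP, fun i => by simp [hP]⟩
  · rintro f g ⟨hf1, hf2, hf3⟩ ⟨hg1, hg2, hg3⟩ h
    funext i
    rw [monic_eq_prod (hf1 i) ((hf2 i).le.trans (hM i)),
      monic_eq_prod (hg1 i) ((hg2 i).le.trans (hM i))]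
    refine Finset.prod_congr rfl fun P hP => ?_
    have := DFunLike.congr_fun (DFunLike.congr_fun h P) i
    simp [hP] at this
    rcases this with h | h
    · rw [h]
    · have := hpos P hP
      rw [h] at this; simp at this
  · intro l hl
    simp only [Finset.coe_filter, Set.mem_ofPred_eq, Finset.mem_finsuppAntidiag] at hl
    obtain ⟨⟨h1, h2⟩, h3⟩ := hl
    choose! a ha1 ha2 using h3
    have hc : ∀ i, ∀ P ∈ PM F M, cnt P (∏ Q ∈ PM F M, Q ^ a Q i) = a P i := fun i P hP =>
      cnt_prod_pow (fun Q => a Q i) hP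
    refine ⟨fun i => ∏ Q ∈ PM F M, Q ^ a Q i, ⟨?_, ?_, ?_⟩, ?_⟩
    · intro i
      exact Polynomial.monic_prod_of_monic _ _ fun Q hQ => (mem_PM.1 hQ).1.pow _
    · intro i
      rw [natDegree_prod_pow, ← h1, Finsupp.finsetSum_apply]
      refine Finset.sum_congr rfl fun P hP => ?_
      rw [ha2 P hP]
    · intro P hP
      have : (fun i => cnt P (∏ Q ∈ PM F M, Q ^ a Q i)) = a P := funext fun i => hc i P hP
      rw [this]; exact ha1 P hP
    · ext P i
      by_cases hP : P ∈ PM F M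
      · simp [hP, hc i P hP, ha2 P hP]
      · have : l P = 0 := by
          by_contra h
          exact hP (h2 (Finsupp.mem_support_iff.2 h))
        simp [hP, this]

lemma card_monic (F : Type) [Field F] [Fintype F] (n : ℕ) :
    Set.ncard {f : F[X] | f.Monic ∧ f.natDegree = n} = Fintype.card F ^ n := by
  have e := (Polynomial.monicEquivDegreeLT (R := F) n).trans (Polynomial.degreeLTEquiv F n).toEquiv
  rw [← Nat.card_coe_set_eq]
  have := Nat.card_congr e
  rw [Nat.card_fun, Nat.card_eq_fintype_card (α := F), Nat.card_fin] at this
  exact this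

lemma finite_monic (F : Type) [Field F] [Fintype F] (n : ℕ) :
    {f : F[X] | f.Monic ∧ f.natDegree = n}.Finite :=
  (finite_natDegree_le F n).subset fun _ h => h.2.le

lemma coeff_zeta (F : Type) [Field F] [Fintype F] (M n : ℕ) (h : n ≤ M) :
    PowerSeries.coeff n (∏ P ∈ PM F M, Ind (σ := Unit) Set.univ P.natDegree : PowerSeries ℝ) =
      (Fintype.card F : ℝ) ^ n := by
  have h1 := euler (F := F) (σ := Unit) (fun _ => Set.univ) (Finsupp.single () n) M
    (by intro i; simpa using h)
  have h2 : PowerSeries.coeff n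
      (∏ P ∈ PM F M, Ind (σ := Unit) Set.univ P.natDegree : PowerSeries ℝ) =
      MvPowerSeries.coeff (Finsupp.single () n)
        (∏ P ∈ PM F M, Ind (σ := Unit) Set.univ P.natDegree) := rfl
  rw [h2, h1]
  have h3 := card_monic F n
  have : Set.ncard {f : Unit → F[X] | (∀ i, (f i).Monic) ∧
      (∀ i, (f i).natDegree = (Finsupp.single () n) i) ∧
        ∀ P ∈ PM F M, (fun i => cnt P (f i)) ∈ Set.univ} = 
      Set.ncard {f : F[X] | f.Monic ∧ f.natDegree = n} := by
    refine Set.ncard_congr (fun f _ => f ()) ?_ ?_ ?_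
    · rintro f ⟨a, b, _⟩
      exact ⟨a (), by simpa using b ()⟩
    · intro f g _ _ h
      funext i; exact h
    · rintro f ⟨a, b⟩
      exact ⟨fun _ => f, ⟨fun _ => a, fun _ => by simpa using b, fun _ _ => trivial⟩, rfl⟩
  rw [this, h3]; push_cast; rfl

lemma Ind_mul (p : ℕ) (hp : 0 < p) :
    (Ind (σ := Unit) Set.univ p : PowerSeries ℝ) * (1 - PowerSeries.X ^ p) = 1 := by
  classical
  have hc : ∀ n, PowerSeries.coeff n (Ind (σ := Unit) Set.univ p : PowerSeries ℝ) =
      if p ∣ n then 1 else 0 := by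
    intro n
    have : PowerSeries.coeff n (Ind (σ := Unit) Set.univ p : PowerSeries ℝ) =
      MvPowerSeries.coeff (Finsupp.single () n) (Ind (σ := Unit) Set.univ p) := rfl
    rw [this, coeff_Ind]
    congr 1
    apply propext
    constructor
    · rintro ⟨a, _, h⟩
      exact ⟨a (), by simpa using h ()⟩
    · rintro ⟨a, h⟩
      exact ⟨fun _ => a, trivial, by intro i; simpa using h⟩
  ext n
  rw [mul_sub, mul_one, map_sub, PowerSeries.coeff_mul_X_pow', hc, PowerSeries.coeff_one, hc]
  by_cases hn : p ≤ n
  · have h2 : p ∣ n - p ↔ p ∣ n := by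
      rw [Nat.dvd_sub_iff_left hn (dvd_refl p)]
    have h0 : n ≠ 0 := by omega
    simp [hn, h2, h0]
  · by_cases h0 : n = 0
    · subst h0; simp [hn]
    · have : ¬ p ∣ n := fun h => hn (Nat.le_of_dvd (Nat.pos_of_ne_zero h0) h)
      simp [hn, h0, this]

lemma zeta_poly (F : Type) [Field F] [Fintype F] (M : ℕ) :
    (X : ℝ[X]) ^ (M + 1) ∣ (∏ P ∈ PM F M, (1 - (X : ℝ[X]) ^ P.natDegree)) -
      (1 - C (Fintype.card F : ℝ) * X) := by
  set q : ℝ := (Fintype.card F : ℝ) with hq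
  set Z : PowerSeries ℝ := ∏ P ∈ PM F M, Ind (σ := Unit) Set.univ P.natDegree with hZ
  set Y : PowerSeries ℝ := ∏ P ∈ PM F M, (1 - PowerSeries.X ^ P.natDegree) with hY
  set G : PowerSeries ℝ := PowerSeries.mk (fun n => q ^ n) with hG
  have hZY : Z * Y = 1 := by
    rw [hZ, hY, ← Finset.prod_mul_distrib]
    exact Finset.prod_eq_one fun P hP => Ind_mul _ (mem_PM.1 hP).2.1.natDegree_pos
  have hGq : (1 - PowerSeries.C q * PowerSeries.X) * G = 1 := by
    ext n
    rw [sub_mul, one_mul, map_sub, mul_assoc, PowerSeries.coeff_C_mul]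
    cases n with
    | zero => simp [hG]
    | succ n => 
      rw [PowerSeries.coeff_succ_X_mul, PowerSeries.coeff_one]
      simp [hG, pow_succ, mul_comm]
  have hd : (PowerSeries.X : PowerSeries ℝ) ^ (M + 1) ∣ G - Z := by
    rw [PowerSeries.X_pow_dvd_iff]
    intro m hm
    rw [map_sub, hZ, coeff_zeta F M m (by omega)]
    simp [hG, hq]
  have he : Y - (1 - PowerSeries.C q * PowerSeries.X) =
      Y * (1 - PowerSeries.C q * PowerSeries.X) * (G - Z) := by
    linear_combination (-Y) * hGq + (1 - PowerSeries.C q * PowerSeries.X) * hZY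
  have hd2 : (PowerSeries.X : PowerSeries ℝ) ^ (M + 1) ∣
      Y - (1 - PowerSeries.C q * PowerSeries.X) := by
    rw [he]; exact Dvd.dvd.mul_left hd _
  rw [PowerSeries.X_pow_dvd_iff] at hd2
  rw [Polynomial.X_pow_dvd_iff]
  intro d hd
  rw [← hd2 d hd, ← Polynomial.coeff_coe]
  congr 1
  have hcp : (((∏ P ∈ PM F M, (1 - (X : ℝ[X]) ^ P.natDegree)) : ℝ[X]) : PowerSeries ℝ) = Y := by
    rw [← Polynomial.coeToPowerSeries.ringHom_apply, map_prod, hY]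
    refine Finset.prod_congr rfl fun P _ => ?_
    simp
  rw [Polynomial.coe_sub, hcp]
  simp

lemma sqfree_coeff (F : Type) [Field F] [Fintype F] (M n : ℕ) :
    0 ≤ (∏ P ∈ PM F M, (1 + (X : ℝ[X]) ^ P.natDegree)).coeff n ∧
    (∏ P ∈ PM F M, (1 + (X : ℝ[X]) ^ P.natDegree)).coeff n ≤ (Fintype.card F : ℝ) ^ n := by
  classical
  rw [Finset.prod_one_add, Polynomial.finsetSum_coeff]
  simp_rw [Finset.prod_pow_eq_pow_sum, Polynomial.coeff_X_pow]
  rw [Finset.sum_boole]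
  refine ⟨Nat.cast_nonneg _, ?_⟩
  rw [← Nat.cast_pow, ← card_monic F n]
  norm_cast
  rw [← Set.ncard_coe_finset]
  have key : ∀ T ⊆ PM F M, ∏ P ∈ T, P = ∏ Q ∈ PM F M, Q ^ (if Q ∈ T then 1 else 0) := by
    intro T hT
    rw [← Finset.prod_subset hT]
    · exact Finset.prod_congr rfl fun P hP => by simp [hP]
    · intro P _ hP; simp [hP]
  refine Set.ncard_le_ncard_of_injOn (fun T => ∏ P ∈ T, P) ?_ ?_ (finite_monic F n)
  · intro T hT
    simp only [Finset.coe_filter, Finset.mem_powerset, Set.mem_ofPred_eq] at hT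
    have hm : ∀ P ∈ T, P.Monic := fun P hP => (mem_PM.1 (hT.1 hP)).1
    refine ⟨Polynomial.monic_prod_of_monic _ _ hm, ?_⟩
    rw [Polynomial.natDegree_prod_of_monic _ _ hm, hT.2]
  · intro T hT U hU h
    simp only [Finset.coe_filter, Finset.mem_powerset, Set.mem_ofPred_eq] at hT hU
    simp only at h
    rw [key T hT.1, key U hU.1] at h
    ext P
    by_cases hP : P ∈ PM F M
    · have h2 := congrArg (cnt P) h
      rw [cnt_prod_pow (fun Q => if Q ∈ T then 1 else 0) hP,
        cnt_prod_pow (fun Q => if Q ∈ U then 1 else 0) hP] at h2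
      by_cases h3 : P ∈ T <;> by_cases h4 : P ∈ U <;> simp_all
    · exact ⟨fun h => absurd (hT.1 h) hP, fun h => absurd (hU.1 h) hP⟩

def Adm {α β : Type} [DecidableEq α] [DecidableEq β] (S : Finset α) (T : Finset β)
    (r : α → ℕ) (c : β → ℕ) (J : Finset (α × β)) : Prop :=
  (∀ i ∈ S, (J.filter fun p => p.1 = i).card ≤ r i) ∧
  (∀ j ∈ T, (J.filter fun p => p.2 = j).card ≤ c j)

open Classical in
lemma comb {α β : Type} [DecidableEq α] [DecidableEq β] [Nonempty α]
    (S : Finset α) (T : Finset β) (r : α → ℕ) (c : β → ℕ)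
    (hsum : ∑ i ∈ S, r i = ∑ j ∈ T, c j) (j : β) (hj : j ∈ T) (hc : 0 < c j)
    (hv : S.card ≤ c j ∨ ∑ i ∈ S, r i ≤ c j) :
    ∑ J ∈ (S ×ˢ T).powerset with Adm S T r c J, (-1 : ℝ) ^ J.card = 0 := by
  have hpick : ∀ J' : Finset (α × β), ∃ i, (∃ i ∈ S, (J'.filter fun p => p.1 = i).card < r i) →
      i ∈ S ∧ (J'.filter fun p => p.1 = i).card < r i := by
    intro J'
    by_cases h : ∃ i ∈ S, (J'.filter fun p => p.1 = i).card < r i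
    · obtain ⟨i, h1, h2⟩ := h
      exact ⟨i, fun _ => ⟨h1, h2⟩⟩
    · exact ⟨Classical.arbitrary α, fun h' => absurd h' h⟩
  choose pick hpick using hpick
  let nj : Finset (α × β) → Finset (α × β) := fun J => J.filter fun p => p.2 ≠ j
  have hex : ∀ J ⊆ S ×ˢ T, Adm S T r c J →
      ∃ i ∈ S, ((nj J).filter fun p => p.1 = i).card < r i := by
    intro J hJ hA
    by_contra! hcon
    have h1 : ∑ i ∈ S, r i ≤ (nj J).card := by
      rw [Finset.card_eq_sum_card_fiberwise (f := Prod.fst) (t := S)]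
      · exact Finset.sum_le_sum hcon
      · intro p hp
        have := hJ (Finset.mem_filter.1 hp).1
        exact (Finset.mem_product.1 this).1
    have h2 : (nj J).card ≤ ∑ j' ∈ T.erase j, c j' := by
      rw [Finset.card_eq_sum_card_fiberwise (f := Prod.snd) (t := T.erase j)]
      · refine Finset.sum_le_sum fun j' hj' => ?_
        refine le_trans (Finset.card_le_card ?_) (hA.2 j' (Finset.mem_of_mem_erase hj'))
        exact Finset.filter_subset_filter _ (Finset.filter_subset _ _)
      · intro p hp
        have h3 := Finset.mem_filter.1 hp
        exact Finset.mem_erase.2 ⟨h3.2, (Finset.mem_product.1 (hJ h3.1)).2⟩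
    have h3 := Finset.add_sum_erase T c hj
    omega
  let tog : Finset (α × β) → Finset (α × β) := fun J =>
    if (pick (nj J), j) ∈ J then J.erase (pick (nj J), j) else insert (pick (nj J), j) J
  have hnj : ∀ J, nj (tog J) = nj J := by
    intro J
    ext p
    simp only [tog, nj]
    split_ifs with h <;> simp only [Finset.mem_filter, Finset.mem_erase, Finset.mem_insert] <;> grind
  have htog : ∀ J, tog (tog J) = J := by
    intro J
    have : tog (tog J) = if (pick (nj J), j) ∈ tog J then (tog J).erase (pick (nj J), j)
      else insert (pick (nj J), j) (tog J) := by
        rw [← hnj J]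
    rw [this]
    simp only [tog]
    by_cases h : (pick (nj J), j) ∈ J
    · simp [h]
    · simp [h]
  have hne : ∀ J, tog J ≠ J := by
    intro J
    simp only [tog]
    split_ifs with h
    · exact fun h' => Finset.erase_eq_self.1 h' h
    · exact fun h' => h (Finset.insert_eq_self.1 h')
  have hcard : ∀ J, (-1 : ℝ) ^ J.card + (-1 : ℝ) ^ (tog J).card = 0 := by
    intro J
    simp only [tog]
    split_ifs with h
    · rw [← Finset.card_erase_add_one h, pow_succ]; ring
    · rw [Finset.card_insert_of_notMem h, pow_succ]; ring
  refine Finset.sum_involution (fun J _ => tog J) (fun J _ => hcard J) (fun J _ _ => hne J) ?_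
    (fun J _ => htog J)
  intro J hJ
  rw [Finset.mem_filter, Finset.mem_powerset] at hJ ⊢
  obtain ⟨hJs, hA⟩ := hJ
  obtain ⟨hp1, hp2⟩ := hpick _ (hex J hJs hA)
  have hsub : tog J ⊆ S ×ˢ T := by
    simp only [tog]
    split_ifs with h
    · exact (Finset.erase_subset _ _).trans hJs
    · exact Finset.insert_subset (Finset.mem_product.2 ⟨hp1, hj⟩) hJs
  have hrow : ∀ i ∈ S, ((tog J).filter fun p => p.1 = i).card ≤ r i := by
    intro i hi
    by_cases hii : i = pick (nj J)
    · have : ((tog J).filter fun p => p.1 = i) ⊆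
          insert (i, j) ((nj J).filter fun p => p.1 = i) := by
        rw [← hnj J]
        intro p hp
        simp only [nj, Finset.mem_filter, Finset.mem_insert] at hp ⊢
        by_cases h : p.2 = j
        · left; ext <;> simp [hp.2, h]
        · right; exact ⟨⟨hp.1, h⟩, hp.2⟩
      have h2 := (Finset.card_le_card this).trans (Finset.card_insert_le _ _)
      rw [hii] at h2 ⊢
      omega
    · refine le_trans (Finset.card_le_card ?_) (hA.1 i hi)
      intro p hp
      simp only [tog] at hp
      simp only [Finset.mem_filter] at hp ⊢
      split_ifs at hp with h
      · exact ⟨Finset.mem_of_mem_erase hp.1, hp.2⟩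
      · refine ⟨?_, hp.2⟩
        rcases Finset.mem_insert.1 hp.1 with h' | h'
        · exfalso; apply hii; rw [← hp.2, h']
        · exact h'
  refine ⟨hsub, hrow, ?_⟩
  intro j' hj'
  by_cases hjj : j' = j
  · subst hjj
    rcases hv with hv | hv
    · refine le_trans ?_ hv
      refine Finset.card_le_card_of_injOn Prod.fst ?_ ?_
      · intro p hp
        have := hsub (Finset.mem_filter.1 hp).1
        exact (Finset.mem_product.1 this).1
      · intro p hp p' hp' h
        have h1 := (Finset.mem_filter.1 hp).2
        have h2 := (Finset.mem_filter.1 hp').2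
        exact Prod.ext h (h1.trans h2.symm)
    · refine le_trans (Finset.card_filter_le _ _) (le_trans ?_ hv)
      rw [Finset.card_eq_sum_card_fiberwise (f := Prod.fst) (t := S)]
      · exact Finset.sum_le_sum hrow
      · intro p hp
        exact (Finset.mem_product.1 (hsub hp)).1
  · refine le_trans (Finset.card_le_card ?_) (hA.2 j' hj')
    intro p hp
    simp only [tog] at hp
    simp only [Finset.mem_filter] at hp ⊢
    split_ifs at hp with h
    · exact ⟨Finset.mem_of_mem_erase hp.1, hp.2⟩
    · refine ⟨?_, hp.2⟩
      rcases Finset.mem_insert.1 hp.1 with h' | h'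
      · exfalso; apply hjj; rw [← hp.2, h']
      · exact h'

open Classical in
lemma comb_swap {α β : Type} [DecidableEq α] [DecidableEq β] [Nonempty β]
    (S : Finset α) (T : Finset β) (r : α → ℕ) (c : β → ℕ)
    (hsum : ∑ i ∈ S, r i = ∑ j ∈ T, c j) (i : α) (hi : i ∈ S) (hc : 0 < r i)
    (hv : ∑ j ∈ T, c j ≤ r i) :
    ∑ J ∈ (S ×ˢ T).powerset with Adm S T r c J, (-1 : ℝ) ^ J.card = 0 := by
  rw [← comb T S c r hsum.symm i hi hc (Or.inr hv)]
  have key : ∀ {α β : Type} [DecidableEq α] [DecidableEq β] (S : Finset α) (T : Finset β)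
      (r : α → ℕ) (c : β → ℕ) (J : Finset (α × β)), J ⊆ S ×ˢ T → Adm S T r c J →
      J.map (Equiv.prodComm α β).toEmbedding ⊆ T ×ˢ S ∧
      Adm T S c r (J.map (Equiv.prodComm α β).toEmbedding) := by
    intro α β _ _ S T r c J hJ hA
    refine ⟨?_, ?_, ?_⟩
    · intro p hp
      obtain ⟨x, hx, rfl⟩ := Finset.mem_map.1 hp
      have := Finset.mem_product.1 (hJ hx)
      exact Finset.mem_product.2 ⟨this.2, this.1⟩
    · intro j hj
      rw [Finset.filter_map, Finset.card_map]
      exact hA.2 j hj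
    · intro j hj
      rw [Finset.filter_map, Finset.card_map]
      exact hA.1 j hj
  refine Finset.sum_nbij' (fun J => J.map (Equiv.prodComm α β).toEmbedding)
    (fun J => J.map (Equiv.prodComm β α).toEmbedding) ?_ ?_ ?_ ?_ ?_
  · intro J hJ
    rw [Finset.mem_filter, Finset.mem_powerset] at hJ ⊢
    exact key _ _ _ _ _ hJ.1 hJ.2
  · intro J hJ
    rw [Finset.mem_filter, Finset.mem_powerset] at hJ ⊢
    exact key _ _ _ _ _ hJ.1 hJ.2
  · intro J _
    ext p; simp
  · intro J _
    ext p; simp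
  · intro J _
    simp

def Maj {σ : Type} (f g : MvPowerSeries σ ℝ) : Prop :=
  ∀ n, |MvPowerSeries.coeff n f| ≤ MvPowerSeries.coeff n g

lemma Maj.mul {σ : Type} {f g f' g' : MvPowerSeries σ ℝ} (h : Maj f g) (h' : Maj f' g') :
    Maj (f * f') (g * g') := by
  classical
  intro n
  rw [MvPowerSeries.coeff_mul, MvPowerSeries.coeff_mul]
  refine (Finset.abs_sum_le_sum_abs _ _).trans (Finset.sum_le_sum fun p _ => ?_)
  rw [abs_mul]
  exact mul_le_mul (h _) (h' _) (abs_nonneg _) ((abs_nonneg _).trans (h _))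

lemma Maj.trans {σ : Type} {f g h : MvPowerSeries σ ℝ} (h1 : Maj f g) (h2 : Maj g h) :
    Maj f h := fun n => (h1 n).trans ((le_abs_self _).trans (h2 n))

lemma Maj.one {σ : Type} : Maj (1 : MvPowerSeries σ ℝ) 1 := by
  classical
  intro n
  rw [MvPowerSeries.coeff_one]
  split_ifs <;> simp

lemma Maj.prod {σ ι : Type} (s : Finset ι) {f g : ι → MvPowerSeries σ ℝ}
    (h : ∀ i ∈ s, Maj (f i) (g i)) : Maj (∏ i ∈ s, f i) (∏ i ∈ s, g i) := by
  classical
  induction s using Finset.induction_on with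
  | empty => simpa using Maj.one
  | insert a s ha ih =>
    rw [Finset.prod_insert ha, Finset.prod_insert ha]
    exact (h a (Finset.mem_insert_self _ _)).mul
      (ih fun i hi => h i (Finset.mem_insert_of_mem hi))

lemma Maj.monomial {σ : Type} (m : σ →₀ ℕ) :
    Maj (MvPowerSeries.monomial m (1 : ℝ)) (MvPowerSeries.monomial m (1 : ℝ)) := by
  classical
  intro n
  rw [MvPowerSeries.coeff_monomial]
  split_ifs <;> simp

lemma Maj.add {σ : Type} {f g f' g' : MvPowerSeries σ ℝ} (h : Maj f g) (h' : Maj f' g') :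
    Maj (f + f') (g + g') := by
  intro n
  rw [map_add, map_add]
  exact (abs_add_le _ _).trans (add_le_add (h n) (h' n))

lemma Maj.neg {σ : Type} {f g : MvPowerSeries σ ℝ} (h : Maj f g) : Maj (-f) g := by
  intro n
  rw [map_neg, abs_neg]; exact h n

lemma Maj.zero_left {σ : Type} {f g : MvPowerSeries σ ℝ} (h : Maj f g) : Maj 0 g := by
  intro n
  simpa using (abs_nonneg _).trans (h n)

lemma Maj.sum {σ ι : Type} (s : Finset ι) {f g : ι → MvPowerSeries σ ℝ}
    (h : ∀ i ∈ s, Maj (f i) (g i)) : Maj (∑ i ∈ s, f i) (∑ i ∈ s, g i) := by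
  classical
  induction s using Finset.induction_on with
  | empty => intro n; simp
  | insert a s ha ih =>
    rw [Finset.sum_insert ha, Finset.sum_insert ha]
    exact (h a (Finset.mem_insert_self _ _)).add
      (ih fun i hi => h i (Finset.mem_insert_of_mem hi))

lemma Maj.one_add_sum {σ ι : Type} (s : Finset ι) (y : ι → MvPowerSeries σ ℝ)
    (h : ∀ i ∈ s, Maj (y i) (y i)) : Maj (1 + ∑ i ∈ s, y i) (∏ i ∈ s, (1 + y i)) := by
  classical
  induction s using Finset.induction_on with
  | empty => simpa using Maj.one
  | insert a s ha ih =>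
    rw [Finset.sum_insert ha, Finset.prod_insert ha]
    have ha' := h a (Finset.mem_insert_self _ _)
    have hs' : ∀ i ∈ s, Maj (y i) (y i) := fun i hi => h i (Finset.mem_insert_of_mem hi)
    have hs := Maj.sum s hs'
    have h1 : Maj (1 + (y a + ∑ i ∈ s, y i)) ((1 + y a) * (1 + ∑ i ∈ s, y i)) := by
      have h2 := (Maj.one.add (ha'.add hs)).add ((ha'.mul hs).zero_left)
      convert h2 using 1 <;> ring
    exact h1.trans ((Maj.one.add ha').mul (ih hs'))

def Bd {k : ℕ} (s : ℝ) (U : Finset (Fin k)) (K : ℕ) (f : MvPowerSeries (Fin k) ℝ) : Prop :=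
  ∀ n, |MvPowerSeries.coeff n f| ≤ (1 + (n.degree : ℝ)) ^ K * s ^ (∑ i ∈ U, n i)

lemma card_antidiagonal_le {k : ℕ} (n : Fin k →₀ ℕ) :
    (Finset.HasAntidiagonal.antidiagonal n).card ≤ (1 + n.degree) ^ k := by
  have h : (Finset.HasAntidiagonal.antidiagonal n).card ≤ (Finset.Iic n).card := by
    refine Finset.card_le_card_of_injOn Prod.fst ?_ ?_
    · intro p hp
      have := Finset.HasAntidiagonal.mem_antidiagonal.1 hp
      simp only [Finset.coe_Iic, Set.mem_Iic]
      rw [← this]; exact le_self_add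
    · intro p hp p' hp' h
      have h1 := Finset.HasAntidiagonal.mem_antidiagonal.1 hp
      have h2 := Finset.HasAntidiagonal.mem_antidiagonal.1 hp'
      refine Prod.ext h ?_
      rw [← h2, h] at h1
      exact add_left_cancel h1
  refine h.trans ?_
  have h2 : (Finset.Iic n).card ≤ (Fintype.piFinset fun i : Fin k => Finset.range (n i + 1)).card := by
    refine Finset.card_le_card_of_injOn (fun m => (m : Fin k → ℕ)) ?_ ?_
    · intro m hm
      simp only [Finset.coe_Iic, Set.mem_Iic] at hm
      rw [Finset.mem_coe, Fintype.mem_piFinset]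
      intro i
      have := hm i
      simp; omega
    · intro a _ b _ h
      exact DFunLike.coe_injective h
  refine h2.trans ?_
  rw [Fintype.card_piFinset]
  calc ∏ i : Fin k, (Finset.range (n i + 1)).card ≤ ∏ i : Fin k, (1 + n.degree) := by
        refine Finset.prod_le_prod' fun i _ => ?_
        have := Finsupp.le_degree i n
        simp; omega
    _ = (1 + n.degree) ^ k := by simp

lemma Bd.mul {k : ℕ} {s : ℝ} (hs : 1 ≤ s) {U : Finset (Fin k)} {K K' : ℕ}
    {f g : MvPowerSeries (Fin k) ℝ} (hf : Bd s U K f) (hg : Bd s U K' g) :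
    Bd s U (K + K' + k) (f * g) := by
  classical
  intro n
  rw [MvPowerSeries.coeff_mul]
  have hs0 : 0 ≤ s := by linarith
  refine (Finset.abs_sum_le_sum_abs _ _).trans ?_
  have : ∀ p ∈ Finset.HasAntidiagonal.antidiagonal n,
      |MvPowerSeries.coeff p.1 f * MvPowerSeries.coeff p.2 g| ≤
      (1 + (n.degree : ℝ)) ^ (K + K') * s ^ (∑ i ∈ U, n i) := by
    intro p hp
    have hp' := Finset.HasAntidiagonal.mem_antidiagonal.1 hp
    have hd : p.1.degree + p.2.degree = n.degree := by rw [← hp', map_add]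
    have hU : ∑ i ∈ U, n i = ∑ i ∈ U, p.1 i + ∑ i ∈ U, p.2 i := by
      rw [← Finset.sum_add_distrib]
      refine Finset.sum_congr rfl fun i _ => ?_
      rw [← hp']; rfl
    have hd1 : (p.1.degree : ℝ) ≤ n.degree := by exact_mod_cast (by omega : p.1.degree ≤ n.degree)
    have hd2 : (p.2.degree : ℝ) ≤ n.degree := by exact_mod_cast (by omega : p.2.degree ≤ n.degree)
    rw [abs_mul, hU, pow_add, pow_add]
    calc _ ≤ ((1 + (p.1.degree : ℝ)) ^ K * s ^ (∑ i ∈ U, p.1 i)) *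
          ((1 + (p.2.degree : ℝ)) ^ K' * s ^ (∑ i ∈ U, p.2 i)) :=
          mul_le_mul (hf _) (hg _) (abs_nonneg _) (by positivity)
      _ = ((1 + (p.1.degree : ℝ)) ^ K * (1 + (p.2.degree : ℝ)) ^ K') *
          (s ^ (∑ i ∈ U, p.1 i) * s ^ (∑ i ∈ U, p.2 i)) := by ring
      _ ≤ _ := by gcongr
  refine (Finset.sum_le_card_nsmul _ _ _ this).trans ?_
  rw [nsmul_eq_mul, pow_add _ (K + K') k]
  have h2 : ((Finset.HasAntidiagonal.antidiagonal n).card : ℝ) ≤ (1 + (n.degree : ℝ)) ^ k := by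
    exact_mod_cast card_antidiagonal_le n
  calc _ ≤ (1 + (n.degree : ℝ)) ^ k * ((1 + (n.degree : ℝ)) ^ (K + K') * s ^ (∑ i ∈ U, n i)) := by
        gcongr
    _ = _ := by ring

lemma Bd.of_le_one {k : ℕ} {s : ℝ} (hs : 1 ≤ s) (U : Finset (Fin k))
    {f : MvPowerSeries (Fin k) ℝ} (hf : ∀ n, |MvPowerSeries.coeff n f| ≤ 1) : Bd s U 0 f := by
  intro n
  rw [pow_zero, one_mul]
  exact (hf n).trans (one_le_pow₀ hs)

lemma Bd.one {k : ℕ} {s : ℝ} (hs : 1 ≤ s) (U : Finset (Fin k)) : Bd s U 0 1 := by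
  classical
  refine Bd.of_le_one hs U fun n => ?_
  rw [MvPowerSeries.coeff_one]
  split_ifs <;> simp

lemma Bd.prod {k : ℕ} {s : ℝ} (hs : 1 ≤ s) (U : Finset (Fin k)) {ι : Type} (t : Finset ι)
    {f : ι → MvPowerSeries (Fin k) ℝ} (hf : ∀ i ∈ t, Bd s U 0 (f i)) :
    Bd s U (t.card * k) (∏ i ∈ t, f i) := by
  classical
  induction t using Finset.induction_on with
  | empty => simpa using Bd.one hs U
  | insert a t ha ih =>
    rw [Finset.prod_insert ha, Finset.card_insert_of_notMem ha]
    have := (hf a (Finset.mem_insert_self _ _)).mul hs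
      (ih fun i hi => hf i (Finset.mem_insert_of_mem hi))
    convert this using 1
    ring

lemma Bd.of_maj {k : ℕ} {s : ℝ} {U : Finset (Fin k)} {K : ℕ}
    {f g : MvPowerSeries (Fin k) ℝ} (h : Maj f g) (hg : Bd s U K g) : Bd s U K f :=
  fun n => (h n).trans ((le_abs_self _).trans (hg n))

lemma coeff_aeval {k : ℕ} (m n : Fin k →₀ ℕ) (Q : ℝ[X]) :
    MvPowerSeries.coeff n (Polynomial.aeval (MvPowerSeries.monomial m (1 : ℝ)) Q) =
      ∑ t ∈ Finset.range (Q.natDegree + 1), if n = t • m then Q.coeff t else 0 := by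
  classical
  rw [Polynomial.aeval_eq_sum_range, map_sum]
  refine Finset.sum_congr rfl fun t _ => ?_
  rw [MvPowerSeries.monomial_pow, one_pow, MvPowerSeries.coeff_smul, MvPowerSeries.coeff_monomial]
  simp

lemma Bd.sqfree {k : ℕ} (F : Type) [Field F] [Fintype F] (M : ℕ) {s : ℝ}
    (hs : 1 ≤ s) (hq : s ^ 2 = (Fintype.card F : ℝ)) (U : Finset (Fin k)) (m : Fin k →₀ ℕ)
    (hm : 2 ≤ ∑ i ∈ U, m i) :
    Bd s U 0 (∏ P ∈ PM F M, (1 + MvPowerSeries.monomial (P.natDegree • m) (1 : ℝ))) := by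
  classical
  have he : (∏ P ∈ PM F M, (1 + MvPowerSeries.monomial (P.natDegree • m) (1 : ℝ))) =
      Polynomial.aeval (MvPowerSeries.monomial m (1 : ℝ))
        (∏ P ∈ PM F M, (1 + (X : ℝ[X]) ^ P.natDegree)) := by
    rw [map_prod]
    refine Finset.prod_congr rfl fun P _ => ?_
    simp [MvPowerSeries.monomial_pow]
  rw [he]
  intro n
  rw [coeff_aeval, pow_zero, one_mul]
  set Q := (∏ P ∈ PM F M, (1 + (X : ℝ[X]) ^ P.natDegree)) with hQ
  have hs0 : 0 ≤ s := by linarith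
  by_cases h : ∃ t : ℕ, n = t • m
  · obtain ⟨t, rfl⟩ := h
    have hinj : ∀ t', t • m = t' • m ↔ t = t' := by
      intro t'
      constructor
      · intro h
        have h2 : ∑ i ∈ U, (t • m) i = ∑ i ∈ U, (t' • m) i := by rw [h]
        simp only [Finsupp.smul_apply, smul_eq_mul, ← Finset.mul_sum] at h2
        exact Nat.eq_of_mul_eq_mul_right (by omega) h2
      · rintro rfl; rfl
    simp only [hinj, Finset.sum_ite_eq]
    have hb : |Q.coeff t| ≤ s ^ (∑ i ∈ U, (t • m) i) := by
      have := sqfree_coeff F M t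
      rw [abs_of_nonneg this.1]
      refine this.2.trans ?_
      rw [← hq, ← pow_mul]
      refine pow_le_pow_right₀ hs ?_
      simp only [Finsupp.smul_apply, smul_eq_mul, ← Finset.mul_sum]
      rw [mul_comm]; exact Nat.mul_le_mul_left _ hm
    split_ifs
    · exact hb
    · simp only [abs_zero]; positivity
  · push Not at h
    simp only [h, if_false, Finset.sum_const_zero, abs_zero]
    positivity

def ev {k : ℕ} (x : Fin k × Fin k) : Fin k →₀ ℕ := Finsupp.single x.1 1 + Finsupp.single x.2 1

def sev {k : ℕ} (J : Finset (Fin k × Fin k)) : Fin k →₀ ℕ := ∑ x ∈ J, ev x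

lemma sev_apply {k : ℕ} {S : Finset (Fin k)} {J : Finset (Fin k × Fin k)} (hJ : J ⊆ S ×ˢ Sᶜ)
    (i : Fin k) : sev J i = if i ∈ S then (J.filter fun p => p.1 = i).card
      else (J.filter fun p => p.2 = i).card := by
  rw [sev, Finsupp.finsetSum_apply]
  split_ifs with hi
  · rw [Finset.card_filter]
    refine Finset.sum_congr rfl fun p hp => ?_
    have := Finset.mem_product.1 (hJ hp)
    have h2 : p.2 ≠ i := by rintro rfl; exact (Finset.mem_compl.1 this.2) hi
    simp [ev, Finsupp.single_apply, h2]
  · rw [Finset.card_filter]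
    refine Finset.sum_congr rfl fun p hp => ?_
    have := Finset.mem_product.1 (hJ hp)
    have h2 : p.1 ≠ i := by rintro rfl; exact hi this.1
    simp [ev, Finsupp.single_apply, h2]

lemma sum_sev_S {k : ℕ} {S : Finset (Fin k)} {J : Finset (Fin k × Fin k)} (hJ : J ⊆ S ×ˢ Sᶜ) :
    ∑ i ∈ S, sev J i = J.card := by
  rw [Finset.card_eq_sum_card_fiberwise (f := Prod.fst) (t := S)]
  · exact Finset.sum_congr rfl fun i hi => by rw [sev_apply hJ]; simp [hi]
  · intro p hp; exact (Finset.mem_product.1 (hJ hp)).1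

lemma sum_sev_Sc {k : ℕ} {S : Finset (Fin k)} {J : Finset (Fin k × Fin k)} (hJ : J ⊆ S ×ˢ Sᶜ) :
    ∑ i ∈ Sᶜ, sev J i = J.card := by
  rw [Finset.card_eq_sum_card_fiberwise (f := Prod.snd) (t := Sᶜ)]
  · exact Finset.sum_congr rfl fun i hi => by
      rw [sev_apply hJ]; simp [Finset.mem_compl.1 hi]
  · intro p hp; exact (Finset.mem_product.1 (hJ hp)).2

lemma adm_iff {k : ℕ} {S : Finset (Fin k)} {J : Finset (Fin k × Fin k)} (hJ : J ⊆ S ×ˢ Sᶜ)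
    (a : Fin k → ℕ) : Adm S Sᶜ a a J ↔ ∀ i, sev J i ≤ a i := by
  constructor
  · intro h i
    rw [sev_apply hJ]
    split_ifs with hi
    · exact h.1 i hi
    · exact h.2 i (Finset.mem_compl.2 hi)
  · intro h
    refine ⟨fun i hi => ?_, fun i hi => ?_⟩
    · have := h i
      rw [sev_apply hJ] at this; simpa [hi] using this
    · have := h i
      rw [sev_apply hJ] at this; simpa [Finset.mem_compl.1 hi] using this

lemma coeff_prod_mul {k : ℕ} (T : Finset (Fin k × Fin k)) (p : ℕ) (c : ℝ)
    (G : MvPowerSeries (Fin k) ℝ) (n : Fin k →₀ ℕ) [∀ J, Decidable (p • sev J ≤ n)] :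
    MvPowerSeries.coeff n ((∏ x ∈ T, (1 - MvPowerSeries.monomial (p • ev x) c)) * G) =
      ∑ J ∈ T.powerset, (-c) ^ J.card *
        (if p • sev J ≤ n then MvPowerSeries.coeff (n - p • sev J) G else 0) := by
  classical
  have h1 : ∀ x : Fin k × Fin k, 1 - MvPowerSeries.monomial (p • ev x) c =
      1 + MvPowerSeries.monomial (p • ev x) (-c) := by
    intro x; rw [map_neg, sub_eq_add_neg]
  simp_rw [h1]
  rw [Finset.prod_one_add, Finset.sum_mul, map_sum]
  refine Finset.sum_congr rfl fun J hJ => ?_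
  clear hJ
  have h2 : ∏ x ∈ J, MvPowerSeries.monomial (p • ev x) (-c) =
      MvPowerSeries.monomial (p • sev J) ((-c) ^ J.card) := by
    induction J using Finset.induction_on with
    | empty => simp [sev]
    | insert a J ha ih =>
      rw [Finset.prod_insert ha, ih, MvPowerSeries.monomial_mul_monomial,
        Finset.card_insert_of_notMem ha, pow_succ', sev, sev, Finset.sum_insert ha, smul_add]
  rw [h2, MvPowerSeries.coeff_monomial_mul]
  split_ifs <;> simp

def Bal {k : ℕ} (S : Finset (Fin k)) : Set (Fin k → ℕ) := {a | ∑ i ∈ S, a i = ∑ i ∈ Sᶜ, a i}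

def loc {k : ℕ} (S : Finset (Fin k)) (p : ℕ) : MvPowerSeries (Fin k) ℝ :=
  (∏ x ∈ S ×ˢ Sᶜ, (1 - MvPowerSeries.monomial (p • ev x) 1)) * Ind (Bal S) p

open Classical in
lemma coeff_loc {k : ℕ} (S : Finset (Fin k)) (p : ℕ) (hp : 0 < p) (n : Fin k →₀ ℕ) :
    (MvPowerSeries.coeff n (loc S p) = 0) ∨ ∃ a : Fin k →₀ ℕ, n = p • a ∧ ⇑a ∈ Bal S ∧
      MvPowerSeries.coeff n (loc S p) =
        ∑ J ∈ (S ×ˢ Sᶜ).powerset with Adm S Sᶜ a a J, (-1 : ℝ) ^ J.card := by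
  rw [loc, coeff_prod_mul]
  by_cases h : ∃ a : Fin k →₀ ℕ, n = p • a ∧ ⇑a ∈ Bal S
  · right
    obtain ⟨a, rfl, ha⟩ := h
    refine ⟨a, rfl, ha, ?_⟩
    rw [Finset.sum_filter]
    refine Finset.sum_congr rfl fun J hJ => ?_
    rw [Finset.mem_powerset] at hJ
    have hiff : p • sev J ≤ p • a ↔ Adm S Sᶜ a a J := by
      rw [adm_iff hJ]
      constructor
      · intro h i
        exact Nat.le_of_mul_le_mul_left (by simpa using h i) hp
      · intro h i
        simpa using Nat.mul_le_mul_left p (h i)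
    by_cases hA : Adm S Sᶜ a a J
    · rw [if_pos (hiff.2 hA), if_pos hA, coeff_Ind, if_pos, mul_one]
      refine ⟨fun i => a i - sev J i, ?_, fun i => ?_⟩
      · have hle := (adm_iff hJ a).1 hA
        have h1 := sum_sev_S hJ
        have h2 := sum_sev_Sc hJ
        simp only [Bal, Set.mem_ofPred_eq] at ha ⊢
        rw [Finset.sum_tsub_distrib _ fun i _ => hle i,
          Finset.sum_tsub_distrib _ fun i _ => hle i, h1, h2, ha]
      · simp [Nat.mul_sub]
    · rw [if_neg (fun h => hA (hiff.1 h)), if_neg hA, mul_zero]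
  · left
    refine Finset.sum_eq_zero fun J hJ => ?_
    rw [Finset.mem_powerset] at hJ
    split_ifs with hle
    · rw [coeff_Ind, if_neg, mul_zero]
      rintro ⟨b, hb1, hb2⟩
      apply h
      refine ⟨Finsupp.equivFunOnFinite.symm b + sev J, ?_, ?_⟩
      · ext i
        have h1 := hb2 i
        have h2 := hle i
        simp only [Finsupp.tsub_apply, Finsupp.smul_apply, smul_eq_mul] at h1 h2
        simp only [Finsupp.smul_apply, Finsupp.add_apply, smul_eq_mul, mul_add,
          Finsupp.equivFunOnFinite_symm_apply_apply]
        omega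
      · simp only [Bal, Set.mem_ofPred_eq, Finsupp.add_apply, Finset.sum_add_distrib,
          Finsupp.equivFunOnFinite_symm_apply_apply, sum_sev_S hJ, sum_sev_Sc hJ] at hb1 ⊢
        rw [hb1]
    · simp

def Good {k : ℕ} (S : Finset (Fin k)) (m : Fin k →₀ ℕ) : Prop :=
  2 ≤ ∑ i ∈ S, m i ∧ 2 ≤ ∑ i ∈ Sᶜ, m i ∧
    ∀ i₀ ∈ S, ∀ j₀ ∈ Sᶜ, 2 ≤ ∑ i ∈ ({i₀, j₀} : Finset (Fin k))ᶜ, m i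

def Box (k : ℕ) : Finset (Fin k →₀ ℕ) :=
  Finset.Iic (Finsupp.equivFunOnFinite.symm fun _ => k * k)

open Classical in
def GM {k : ℕ} (S : Finset (Fin k)) : Finset (Fin k →₀ ℕ) := (Box k).filter (Good S)

open Classical in
lemma mem_GM {k : ℕ} {S : Finset (Fin k)} (hS : S.Nonempty) (a : Fin k →₀ ℕ)
    (ha : ⇑a ∈ Bal S) (h0 : a ≠ 0)
    (hne : ∑ J ∈ (S ×ˢ Sᶜ).powerset with Adm S Sᶜ a a J, (-1 : ℝ) ^ J.card ≠ 0) : a ∈ GM S := by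
  have : Nonempty (Fin k) := ⟨hS.choose⟩
  have ha' : ∑ i ∈ S, a i = ∑ i ∈ Sᶜ, a i := ha
  have hj1 : ∀ j ∈ Sᶜ, a j < k := by
    intro j hj
    by_contra! hcon
    refine hne (comb S Sᶜ a a ha j hj ?_ (Or.inl ?_))
    · have := j.pos; omega
    · exact (Finset.card_le_univ S).trans (by simpa using hcon)
  have hpos : 0 < ∑ i ∈ S, a i := by
    by_contra! hcon
    apply h0
    ext i
    have h1 : ∑ i ∈ S, a i = 0 := by omega
    have h2 : ∑ i ∈ Sᶜ, a i = 0 := by omega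
    rw [Finset.sum_eq_zero_iff] at h1 h2
    by_cases hi : i ∈ S
    · exact h1 i hi
    · exact h2 i (Finset.mem_compl.2 hi)
  have hj2 : ∀ j ∈ Sᶜ, 1 ≤ ∑ i ∈ Sᶜ.erase j, a i := by
    intro j hj
    by_contra! hcon
    have := Finset.add_sum_erase Sᶜ a hj
    exact hne (comb S Sᶜ a a ha j hj (by omega) (Or.inr (by omega)))
  have hi2 : ∀ j ∈ S, 1 ≤ ∑ i ∈ S.erase j, a i := by
    intro j hj
    by_contra! hcon
    have := Finset.add_sum_erase S a hj
    exact hne (comb_swap S Sᶜ a a ha j hj (by omega) (by omega))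
  have h2 : 2 ≤ ∑ i ∈ S, a i := by
    obtain ⟨i, hi, hi'⟩ := Finset.exists_ne_zero_of_sum_ne_zero hpos.ne'
    have := Finset.add_sum_erase S a hi
    have := hi2 i hi
    omega
  have hSc : ∑ i ∈ Sᶜ, a i ≤ k * k := by
    calc ∑ i ∈ Sᶜ, a i ≤ ∑ i ∈ Sᶜ, k := Finset.sum_le_sum fun i hi => (hj1 i hi).le
      _ = Sᶜ.card * k := by simp
      _ ≤ k * k := Nat.mul_le_mul_right _ ((Finset.card_le_univ _).trans (by simp))
  rw [GM, Finset.mem_filter]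
  refine ⟨?_, h2, by omega, ?_⟩
  · rw [Box, Finset.mem_Iic]
    intro i
    simp only [Finsupp.equivFunOnFinite_symm_apply_apply]
    by_cases hi : i ∈ S
    · have := Finset.single_le_sum (f := a) (fun _ _ => Nat.zero_le _) hi
      omega
    · have := Finset.single_le_sum (f := a) (fun _ _ => Nat.zero_le _) (Finset.mem_compl.2 hi)
      omega
  · intro i₀ hi₀ j₀ hj₀
    have hd : Disjoint (S.erase i₀) (Sᶜ.erase j₀) :=
      Finset.disjoint_of_subset_left (Finset.erase_subset _ _)
        (Finset.disjoint_of_subset_right (Finset.erase_subset _ _) disjoint_compl_right)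
    have hsub : S.erase i₀ ∪ Sᶜ.erase j₀ ⊆ ({i₀, j₀} : Finset (Fin k))ᶜ := by
      intro x hx
      simp only [Finset.mem_union, Finset.mem_erase, Finset.mem_compl, Finset.mem_insert,
        Finset.mem_singleton] at hx hj₀ ⊢
      rcases hx with h | h
      · rintro (rfl | rfl)
        · exact h.1 rfl
        · exact hj₀ h.2
      · rintro (rfl | rfl)
        · exact h.2 hi₀
        · exact h.1 rfl
    have h3 := Finset.sum_le_sum_of_subset (f := a) hsub
    rw [Finset.sum_union hd] at h3
    have := hi2 i₀ hi₀
    have := hj2 j₀ hj₀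
    omega

lemma loc_maj {k : ℕ} {S : Finset (Fin k)} (hS : S.Nonempty) (p : ℕ) (hp : 0 < p) :
    Maj (loc S p) (∏ y ∈ GM S ×ˢ Finset.range (2 ^ (k * k)),
      (1 + MvPowerSeries.monomial (p • y.1) (1 : ℝ))) := by
  classical
  refine Maj.trans ?_ (Maj.one_add_sum (GM S ×ˢ Finset.range (2 ^ (k * k)))
    (fun y => MvPowerSeries.monomial (p • y.1) (1 : ℝ)) (fun y _ => Maj.monomial _))
  intro n
  have hrhs : MvPowerSeries.coeff n (1 + ∑ y ∈ GM S ×ˢ Finset.range (2 ^ (k * k)),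
      MvPowerSeries.monomial (p • y.1) (1 : ℝ)) =
      (if n = 0 then 1 else 0) + (2 : ℝ) ^ (k * k) * ∑ m ∈ GM S, if n = p • m then 1 else 0 := by
    rw [map_add, MvPowerSeries.coeff_one, Finset.sum_product, map_sum, Finset.mul_sum]
    congr 1
    refine Finset.sum_congr rfl fun m _ => ?_
    simp only [map_sum, MvPowerSeries.coeff_monomial]
    simp
  rw [hrhs]
  have hnn : 0 ≤ (2 : ℝ) ^ (k * k) * ∑ m ∈ GM S, (if n = p • m then (1 : ℝ) else 0) := by
    refine mul_nonneg (by positivity) (Finset.sum_nonneg fun m _ => ?_)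
    split_ifs <;> simp
  rcases coeff_loc S p hp n with h | ⟨a, rfl, ha, h⟩
  · rw [h, abs_zero]
    refine add_nonneg ?_ hnn
    split_ifs <;> simp
  · by_cases hz : MvPowerSeries.coeff (p • a) (loc S p) = 0
    · rw [hz, abs_zero]
      refine add_nonneg ?_ hnn
      split_ifs <;> simp
    by_cases h0 : a = 0
    · subst h0
      have h1 : (Finset.filter (fun J => Adm S Sᶜ (0 : Fin k →₀ ℕ) (0 : Fin k →₀ ℕ) J)
          (S ×ˢ Sᶜ).powerset) ⊆ {∅} := by
        intro J hJ
        rw [Finset.mem_filter, Finset.mem_powerset] at hJ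
        have h2 := (adm_iff hJ.1 _).1 hJ.2
        have h3 := sum_sev_S hJ.1
        have h4 : ∑ i ∈ S, sev J i = 0 := Finset.sum_eq_zero fun i _ => by simpa using h2 i
        rw [h4] at h3
        exact Finset.mem_singleton.2 (Finset.card_eq_zero.1 h3.symm)
      have h5 : |MvPowerSeries.coeff (p • (0 : Fin k →₀ ℕ)) (loc S p)| ≤ 1 := by
        rw [h]
        refine (Finset.abs_sum_le_sum_abs _ _).trans ?_
        simp only [abs_pow, abs_neg, abs_one, one_pow, Finset.sum_const, nsmul_eq_mul, mul_one]
        exact_mod_cast Finset.card_le_card h1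
      have h6 : p • (0 : Fin k →₀ ℕ) = 0 := smul_zero _
      rw [if_pos h6]
      linarith
    · rw [h] at hz
      have hmem := mem_GM hS a ha h0 hz
      have h1 : (1 : ℝ) ≤ ∑ m ∈ GM S, if p • a = p • m then (1 : ℝ) else 0 := by
        refine le_trans ?_ (Finset.single_le_sum (f := fun m => if p • a = p • m then (1 : ℝ) else 0)
          ?_ hmem)
        · simp
        · intro m _; split_ifs <;> simp
      have h2 : |MvPowerSeries.coeff (p • a) (loc S p)| ≤ 2 ^ (k * k) := by
        rw [h]
        refine (Finset.abs_sum_le_sum_abs _ _).trans ?_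
        simp only [abs_pow, abs_neg, abs_one, one_pow, Finset.sum_const, nsmul_eq_mul, mul_one]
        have h3 := Finset.card_filter_le (S ×ˢ Sᶜ).powerset (fun J => Adm S Sᶜ a a J)
        rw [Finset.card_powerset, Finset.card_product] at h3
        have h4 : S.card * Sᶜ.card ≤ k * k :=
          Nat.mul_le_mul ((Finset.card_le_univ _).trans (by simp))
            ((Finset.card_le_univ _).trans (by simp))
        have h5 := h3.trans (Nat.pow_le_pow_right (by norm_num : 0 < 2) h4)
        exact_mod_cast h5
      have h3 : (2 : ℝ) ^ (k * k) ≤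
          2 ^ (k * k) * ∑ m ∈ GM S, if p • a = p • m then (1 : ℝ) else 0 :=
        le_mul_of_one_le_right (by positivity) h1
      have h4 : (0 : ℝ) ≤ if p • a = 0 then 1 else 0 := by split_ifs <;> simp
      linarith

def sg {k : ℕ} (S : Finset (Fin k)) (n : Fin k → ℕ) (i : Fin k) : ℤ :=
  if i ∈ S then (n i : ℤ) else -(n i : ℤ)

open Classical in
lemma euler_NS {F : Type} [Field F] [Fintype F] {k : ℕ} (S : Finset (Fin k)) (n : Fin k →₀ ℕ)
    (M : ℕ) (hM : ∀ i, n i ≤ M) :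
    MvPowerSeries.coeff n (∏ P ∈ PM F M, Ind (if P = X then Set.univ else Bal S) P.natDegree) =
      (NS F S (sg S n) : ℝ) := by
  rw [euler (fun P => if P = X then Set.univ else Bal S) n M hM, NS]
  congr 2
  ext f
  simp only [Set.mem_ofPred_eq]
  refine and_congr_right fun hm => ?_
  have hdeg : (∀ i, (f i).natDegree = n i) ↔ ((∀ i ∈ S, ((f i).natDegree : ℤ) = sg S n i) ∧
      (∀ i ∉ S, ((f i).natDegree : ℤ) = -sg S n i)) := by
    constructor
    · intro h
      exact ⟨fun i hi => by simp [sg, hi, h], fun i hi => by simp [sg, hi, h]⟩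
    · rintro ⟨h1, h2⟩ i
      by_cases hi : i ∈ S
      · simpa [sg, hi] using h1 i hi
      · simpa [sg, hi] using h2 i hi
  rw [← and_assoc, ← hdeg]
  refine and_congr_right fun hd => ?_
  have h0 : ∀ i, f i ≠ 0 := fun i => (hm i).ne_zero
  have hp0 : ∀ T : Finset (Fin k), ∏ i ∈ T, f i ≠ 0 := fun T =>
    Finset.prod_ne_zero_iff.2 fun i _ => h0 i
  have hX0 : ∀ a : ℕ, (X : F[X]) ^ a ≠ 0 := fun a => pow_ne_zero _ X_ne_zero
  have hcX : ∀ P : F[X], cnt P X = if P = X then 1 else 0 := fun P =>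
    cnt_irr P irreducible_X monic_X
  have hcnt : ∀ (P : F[X]) (a : ℕ) (T : Finset (Fin k)),
      cnt P (X ^ a * ∏ i ∈ T, f i) = a * (if P = X then 1 else 0) + ∑ i ∈ T, cnt P (f i) := by
    intro P a T
    rw [cnt_mul P (hX0 a) (hp0 T), cnt_pow, hcX, cnt_prod P T f fun i _ => h0 i]
  constructor
  · intro h
    refine ⟨∑ i ∈ Sᶜ, cnt X (f i), ∑ i ∈ S, cnt X (f i), ?_⟩
    have hmon : ∀ (a : ℕ) (T : Finset (Fin k)), (X ^ a * ∏ i ∈ T, f i).Monic := fun a T =>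
      (monic_X_pow a).mul (monic_prod_of_monic _ _ fun i _ => hm i)
    set L := X ^ (∑ i ∈ Sᶜ, cnt X (f i)) * ∏ i ∈ S, f i with hL
    set R := X ^ (∑ i ∈ S, cnt X (f i)) * ∏ i ∈ Sᶜ, f i with hR
    have hLm : L.Monic := hmon _ _
    have hRm : R.Monic := hmon _ _
    have hLe := monic_eq_prod hLm (le_max_left L.natDegree R.natDegree)
    have hRe := monic_eq_prod hRm (le_max_right L.natDegree R.natDegree)
    refine hLe.trans (Eq.trans ?_ hRe.symm)
    refine Finset.prod_congr rfl fun P _ => ?_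
    congr 1
    rw [hL, hR, hcnt, hcnt]
    by_cases hPX : P = X
    · subst hPX; simp [add_comm]
    · by_cases hP : P ∈ PM F M
      · have := h P hP
        rw [if_neg hPX] at this
        have h2 : ∑ i ∈ S, cnt P (f i) = ∑ i ∈ Sᶜ, cnt P (f i) := this
        simp [hPX, h2]
      · have hz : ∀ i, cnt P (f i) = 0 := by
          intro i
          by_contra hne
          obtain ⟨a, b, c⟩ := cnt_ne_zero (h0 i) hne
          exact hP (mem_PM.2 ⟨a, b, c.trans ((hd i).le.trans (hM i))⟩)
        simp [hPX, hz]
  · rintro ⟨a, b, h⟩ P hP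
    split_ifs with hPX
    · trivial
    · have := congrArg (cnt P) h
      rw [hcnt, hcnt] at this
      show ∑ i ∈ S, cnt P (f i) = ∑ i ∈ Sᶜ, cnt P (f i)
      simpa [hPX] using this

def EqM {k : ℕ} (M : ℕ) (f g : MvPowerSeries (Fin k) ℝ) : Prop :=
  ∀ n : Fin k →₀ ℕ, n.degree ≤ M → MvPowerSeries.coeff n f = MvPowerSeries.coeff n g

lemma EqM.mul {k M : ℕ} {f g f' g' : MvPowerSeries (Fin k) ℝ} (h : EqM M f g)
    (h' : EqM M f' g') : EqM M (f * f') (g * g') := by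
  classical
  intro n hn
  rw [MvPowerSeries.coeff_mul, MvPowerSeries.coeff_mul]
  refine Finset.sum_congr rfl fun p hp => ?_
  have := Finset.HasAntidiagonal.mem_antidiagonal.1 hp
  have hd : p.1.degree + p.2.degree = n.degree := by rw [← this, map_add]
  rw [h p.1 (by omega), h' p.2 (by omega)]

lemma EqM.prod {k M : ℕ} {ι : Type} (s : Finset ι) {f g : ι → MvPowerSeries (Fin k) ℝ}
    (h : ∀ i ∈ s, EqM M (f i) (g i)) : EqM M (∏ i ∈ s, f i) (∏ i ∈ s, g i) := by
  classical
  induction s using Finset.induction_on with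
  | empty => intro n _; simp
  | insert a s ha ih =>
    rw [Finset.prod_insert ha, Finset.prod_insert ha]
    exact (h a (Finset.mem_insert_self _ _)).mul
      (ih fun i hi => h i (Finset.mem_insert_of_mem hi))

lemma zeta_EqM {k : ℕ} (F : Type) [Field F] [Fintype F] (M : ℕ) (x : Fin k × Fin k) :
    EqM M (1 - MvPowerSeries.monomial (1 • ev x) (Fintype.card F : ℝ))
      (∏ P ∈ PM F M, (1 - MvPowerSeries.monomial (P.natDegree • ev x) (1 : ℝ))) := by
  classical
  obtain ⟨R, hR⟩ := zeta_poly F M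
  have h := congrArg (Polynomial.aeval (MvPowerSeries.monomial (ev x) (1 : ℝ))) hR
  rw [map_sub, map_prod, map_mul] at h
  simp only [map_sub, map_one, map_pow, Polynomial.aeval_X, map_mul, Polynomial.aeval_C,
    MvPowerSeries.monomial_pow, one_pow] at h
  intro n hn
  have h2 := congrArg (MvPowerSeries.coeff n) h
  rw [MvPowerSeries.coeff_monomial_mul, if_neg, map_sub, sub_eq_zero] at h2
  · rw [h2, one_smul]
    congr 2
    rw [← Algebra.smul_def, ← map_smul, smul_eq_mul, mul_one]
  · intro hle
    have h3 := Finsupp.degree_mono hle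
    rw [map_nsmul] at h3
    have : (ev x).degree = 2 := by simp [ev]
    rw [this, smul_eq_mul] at h3
    omega

def KK (k : ℕ) : ℕ := (2 + k * k + 1 + (Box k).card * 2 ^ (k * k)) * k

lemma main_bd {k : ℕ} (F : Type) [Field F] [Fintype F] {S : Finset (Fin k)} (hS : S.Nonempty)
    (U : Finset (Fin k)) (hU : ∀ m ∈ GM S, 2 ≤ ∑ i ∈ U, m i) (n : Fin k →₀ ℕ) {s : ℝ}
    (hs : 1 ≤ s) (hq : s ^ 2 = (Fintype.card F : ℝ)) [∀ J, Decidable (1 • sev J ≤ n)] :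
    |∑ J ∈ (S ×ˢ Sᶜ).powerset, (-(Fintype.card F : ℝ)) ^ J.card *
      (if 1 • sev J ≤ n then (NS F S (sg S (n - 1 • sev J : Fin k →₀ ℕ)) : ℝ) else 0)| ≤
      (1 + (n.degree : ℝ)) ^ (KK k) * s ^ (∑ i ∈ U, n i) := by
  classical
  set M := n.degree + 1 with hMdef
  let Fs : MvPowerSeries (Fin k) ℝ := fun n => (NS F S (sg S n) : ℝ)
  have hFs : ∀ n, MvPowerSeries.coeff n Fs = (NS F S (sg S n) : ℝ) := fun _ => rfl
  have e1 := coeff_prod_mul (S ×ˢ Sᶜ) 1 (Fintype.card F : ℝ) Fs n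
  simp only [hFs] at e1
  rw [← e1]
  have e2 : EqM M Fs
      (∏ P ∈ PM F M, Ind (if P = X then Set.univ else Bal S) P.natDegree) := by
    intro n' hn'
    rw [hFs, euler_NS S n' M fun i => (Finsupp.le_degree i n').trans hn']
  have e3 := (EqM.prod (S ×ˢ Sᶜ) fun x _ => zeta_EqM F M x).mul e2
  rw [e3 n (by omega), Finset.prod_comm, ← Finset.prod_mul_distrib]
  have hX : (X : F[X]) ∈ PM F M := mem_PM.2 ⟨monic_X, irreducible_X, by simp [hMdef]⟩
  set W : MvPowerSeries (Fin k) ℝ :=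
    (∏ x ∈ S ×ˢ Sᶜ, (1 + MvPowerSeries.monomial (ev x) (1 : ℝ))) * Ind Set.univ 1 with hW
  set I := GM S ×ˢ Finset.range (2 ^ (k * k)) with hI
  have hmaj : Maj (∏ P ∈ PM F M, ((∏ x ∈ S ×ˢ Sᶜ,
        (1 - MvPowerSeries.monomial (P.natDegree • ev x) (1 : ℝ))) *
        Ind (if P = X then Set.univ else Bal S) P.natDegree))
      (∏ P ∈ PM F M, ((if P = X then W else 1) *
        ∏ y ∈ I, (1 + MvPowerSeries.monomial (P.natDegree • y.1) (1 : ℝ)))) := by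
    refine Maj.prod _ fun P hP => ?_
    by_cases hPX : P = X
    · subst hPX
      simp only [if_true, natDegree_X, one_smul]
      rw [← mul_one ((∏ x ∈ S ×ˢ Sᶜ, (1 - MvPowerSeries.monomial (ev x) (1 : ℝ))) * _)]
      refine Maj.mul (Maj.mul (Maj.prod _ fun x _ => ?_) ?_) ?_
      · rw [sub_eq_add_neg]
        exact Maj.one.add (Maj.monomial _).neg
      · intro n'
        rw [coeff_Ind]
        split_ifs <;> simp
      · have h1 := Maj.prod I (f := fun _ => (1 : MvPowerSeries (Fin k) ℝ))
          (g := fun y => 1 + MvPowerSeries.monomial y.1 (1 : ℝ)) (fun y _ => by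
            have := Maj.one.add (Maj.monomial y.1).zero_left
            rwa [add_zero] at this)
        rwa [Finset.prod_const_one] at h1
    · simp only [hPX, if_false, one_mul]
      exact loc_maj hS _ (mem_PM.1 hP).2.1.natDegree_pos
  have hfin : (∏ P ∈ PM F M, ((if P = X then W else 1) *
        ∏ y ∈ I, (1 + MvPowerSeries.monomial (P.natDegree • y.1) (1 : ℝ)))) =
      W * ∏ y ∈ I, ∏ P ∈ PM F M, (1 + MvPowerSeries.monomial (P.natDegree • y.1) (1 : ℝ)) := by
    rw [Finset.prod_mul_distrib, Finset.prod_ite_eq' (PM F M) X (fun _ => W), if_pos hX,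
      Finset.prod_comm]
  rw [hfin] at hmaj
  have hInd : Bd s U 0 (Ind (σ := Fin k) Set.univ 1) := by
    refine Bd.of_le_one hs U fun n' => ?_
    rw [coeff_Ind]; split_ifs <;> simp
  have hfac : ∀ x ∈ S ×ˢ Sᶜ, Bd s U 0 (1 + MvPowerSeries.monomial (ev x) (1 : ℝ)) := by
    intro x _
    refine Bd.of_le_one hs U fun n' => ?_
    rw [map_add, MvPowerSeries.coeff_one, MvPowerSeries.coeff_monomial]
    by_cases h1 : n' = 0
    · have : n' ≠ ev x := by
        rintro rfl
        have h2 := DFunLike.congr_fun h1 x.1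
        simp [ev] at h2
      rw [if_pos h1, if_neg this]; simp
    · rw [if_neg h1]; split_ifs <;> simp
  have hW' : Bd s U ((S ×ˢ Sᶜ).card * k + 0 + k) W := (Bd.prod hs U _ hfac).mul hs hInd
  have hI' : Bd s U (I.card * k)
      (∏ y ∈ I, ∏ P ∈ PM F M, (1 + MvPowerSeries.monomial (P.natDegree • y.1) (1 : ℝ))) :=
    Bd.prod hs U _ fun y hy => Bd.sqfree F M hs hq U y.1 (hU _ (Finset.mem_product.1 hy).1)
  have hB := Bd.of_maj hmaj (hW'.mul hs hI') n
  refine hB.trans ?_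
  have hs0 : 0 ≤ s := by linarith
  refine mul_le_mul_of_nonneg_right (pow_le_pow_right₀ ?_ ?_) (by positivity)
  · have : (0 : ℝ) ≤ n.degree := Nat.cast_nonneg _
    linarith
  · have h1 : (S ×ˢ Sᶜ).card ≤ k * k := by
      rw [Finset.card_product]
      exact Nat.mul_le_mul ((Finset.card_le_univ _).trans (by simp))
            ((Finset.card_le_univ _).trans (by simp))
    have h2 : I.card ≤ (Box k).card * 2 ^ (k * k) := by
      rw [hI, Finset.card_product, Finset.card_range]
      exact Nat.mul_le_mul_right _ (Finset.card_filter_le _ _)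
    have h3 := Nat.mul_le_mul_right k h1
    have h4 := Nat.mul_le_mul_right k h2
    rw [KK]
    nlinarith

lemma NS_eq_zero {F : Type} [Field F] {k : ℕ} (S : Finset (Fin k)) (d : Fin k → ℤ)
    (h : (∃ i ∈ S, d i < 0) ∨ ∃ i ∉ S, 0 < d i) : NS F S d = 0 := by
  rw [NS]
  refine Eq.trans (congrArg Set.ncard (Set.eq_empty_iff_forall_notMem.2 ?_)) (Set.ncard_empty _)
  rintro f ⟨_, h1, h2, _⟩
  rcases h with ⟨i, hi, h⟩ | ⟨i, hi, h⟩
  · have := h1 i hi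
    omega
  · have := h2 i hi
    omega

lemma bS_eq_zero {F : Type} [Field F] [Fintype F] {k : ℕ} (S : Finset (Fin k)) (d : Fin k → ℤ)
    (h : (∃ i ∈ S, d i < 0) ∨ ∃ i ∉ S, 0 < d i) : bS F S d = 0 := by
  refine Finset.sum_eq_zero fun J _ => ?_
  rw [wS, NS_eq_zero S]
  · simp
  · rcases h with ⟨i, hi, h⟩ | ⟨i, hi, h⟩
    · left
      refine ⟨i, hi, ?_⟩
      simp only [vJ, hi, if_true]; omega
    · right
      refine ⟨i, hi, ?_⟩
      simp only [vJ, hi, if_false]; omega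

lemma vJ_sev {k : ℕ} {S : Finset (Fin k)} {J : Finset (Fin k × Fin k)} (hJ : J ⊆ S ×ˢ Sᶜ)
    (i : Fin k) : vJ S J i = sg S (sev J) i := by
  rw [vJ, sg, sev_apply hJ]
  split_ifs <;> rfl

lemma sum_sg_S {k : ℕ} (S : Finset (Fin k)) (n : Fin k → ℕ) :
    ∑ i ∈ S, sg S n i = ((∑ i ∈ S, n i : ℕ) : ℤ) := by
  push_cast
  exact Finset.sum_congr rfl fun i hi => by simp [sg, hi]

lemma sum_sg_Sc {k : ℕ} (S : Finset (Fin k)) (n : Fin k → ℕ) :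
    ∑ i ∈ Sᶜ, sg S n i = -((∑ i ∈ Sᶜ, n i : ℕ) : ℤ) := by
  push_cast
  rw [← Finset.sum_neg_distrib]
  exact Finset.sum_congr rfl fun i hi => by simp [sg, Finset.mem_compl.1 hi]

lemma degree_split {k : ℕ} (S : Finset (Fin k)) (n : Fin k →₀ ℕ) :
    n.degree = ∑ i ∈ S, n i + ∑ i ∈ Sᶜ, n i := by
  rw [Finsupp.degree_eq_sum, Finset.sum_add_sum_compl]

lemma wS_sg {F : Type} [Field F] [Fintype F] {k : ℕ} (S : Finset (Fin k)) (n : Fin k →₀ ℕ) :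
    wS F S (sg S n) = (Fintype.card F : ℝ) ^ (-(n.degree : ℝ) / 2) * NS F S (sg S n) := by
  rw [wS, sum_sg_S, sum_sg_Sc, degree_split S n]
  push_cast
  rw [sub_neg_eq_add]

open Classical in
lemma bS_sg {F : Type} [Field F] [Fintype F] {k : ℕ} (S : Finset (Fin k)) (n : Fin k →₀ ℕ) :
    bS F S (sg S n) = (Fintype.card F : ℝ) ^ (-(n.degree : ℝ) / 2) *
      ∑ J ∈ (S ×ˢ Sᶜ).powerset, (-(Fintype.card F : ℝ)) ^ J.card *
      (if 1 • sev J ≤ n then (NS F S (sg S (n - 1 • sev J : Fin k →₀ ℕ)) : ℝ) else 0) := by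
  have hq : (0 : ℝ) < Fintype.card F := by exact_mod_cast Fintype.card_pos
  rw [bS, Finset.mul_sum]
  refine Finset.sum_congr rfl fun J hJ => ?_
  rw [Finset.mem_powerset] at hJ
  rw [one_smul]
  split_ifs with hle
  · have h1 : (fun i => sg S n i - vJ S J i) = sg S (n - sev J : Fin k →₀ ℕ) := by
      ext i
      have := hle i
      rw [vJ_sev hJ]
      simp only [sg, Finsupp.tsub_apply]
      split_ifs <;> push_cast [this] <;> ring
    rw [h1, wS_sg]
    have h2 : ((n - sev J : Fin k →₀ ℕ).degree : ℝ) = n.degree - 2 * J.card := by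
      have h3 : (n - sev J + sev J).degree = n.degree := by rw [tsub_add_cancel_of_le hle]
      rw [map_add, degree_split S (sev J), sum_sev_S hJ, sum_sev_Sc hJ] at h3
      have h4 : ((n - sev J : Fin k →₀ ℕ).degree : ℝ) + (J.card + J.card) = n.degree := by
        exact_mod_cast h3
      linarith
    have h5 : (Fintype.card F : ℝ) ^ (-((n - sev J : Fin k →₀ ℕ).degree : ℝ) / 2) =
        (Fintype.card F : ℝ) ^ (-(n.degree : ℝ) / 2) * (Fintype.card F : ℝ) ^ J.card := by
      rw [← Real.rpow_natCast, ← Real.rpow_add hq, h2]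
      congr 1
      ring
    rw [h5, neg_pow (Fintype.card F : ℝ)]
    ring
  · have : ∃ i, n i < sev J i := by
      by_contra! hcon
      exact hle hcon
    obtain ⟨i, hi⟩ := this
    rw [wS, NS_eq_zero S]
    · simp
    · by_cases hiS : i ∈ S
      · left
        refine ⟨i, hiS, ?_⟩
        rw [vJ_sev hJ]; simp only [sg, hiS, if_true]; omega
      · right
        refine ⟨i, hiS, ?_⟩
        rw [vJ_sev hJ]; simp only [sg, hiS, if_false]; omega

lemma bS_bd {k : ℕ} (F : Type) [Field F] [Fintype F] {S : Finset (Fin k)} (hS : S.Nonempty)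
    (U : Finset (Fin k)) (hU : ∀ m ∈ GM S, 2 ≤ ∑ i ∈ U, m i) (n : Fin k →₀ ℕ) :
    |bS F S (sg S n)| ≤ (1 + (n.degree : ℝ)) ^ (KK k) *
      (Fintype.card F : ℝ) ^ (-((∑ i ∈ Uᶜ, n i : ℕ) : ℝ) / 2) := by
  classical
  have hq : (1 : ℝ) ≤ Fintype.card F := by exact_mod_cast Fintype.card_pos
  have hq0 : (0 : ℝ) < Fintype.card F := by linarith
  have h := main_bd F hS U hU n (s := √(Fintype.card F : ℝ)) (Real.one_le_sqrt.2 hq)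
    (Real.sq_sqrt hq0.le)
  rw [bS_sg, abs_mul, abs_of_nonneg (Real.rpow_nonneg hq0.le _)]
  refine (mul_le_mul_of_nonneg_left h (Real.rpow_nonneg hq0.le _)).trans (le_of_eq ?_)
  rw [mul_left_comm]
  congr 1
  rw [← Real.rpow_natCast, Real.sqrt_eq_rpow, ← Real.rpow_mul hq0.le, ← Real.rpow_add hq0,
    degree_split U n]
  congr 1
  push_cast
  ring

theorem statement10 (k : ℕ) (hk : 1 ≤ k) :
    ∃ C K : ℝ, 0 < C ∧ 0 < K ∧
      ∀ (F : Type) [Field F] [Fintype F],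
      ∀ (S : Finset (Fin k)) (hS : S.Nonempty) (hSc : Sᶜ.Nonempty) (d : Fin k → ℤ),
        ((0 : ℤ) ≤ (∑ i ∈ S, d i) - ∑ i ∈ Sᶜ, d i →
          |bS F S d| ≤ C *
            (((1 + ((∑ i ∈ S, d i) - ∑ i ∈ Sᶜ, d i) : ℤ)) : ℝ) ^ K *
            min
              (min ((Fintype.card F : ℝ) ^
                      ((((-(S.sup' hS d) + Sᶜ.inf' hSc d : ℤ)) : ℝ) / 2))
                   ((Fintype.card F : ℝ) ^ ((-(((∑ i ∈ S, d i : ℤ)) : ℝ)) / 2)))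
              (min ((Fintype.card F : ℝ) ^ (((((∑ i ∈ Sᶜ, d i : ℤ))) : ℝ) / 2))
                   ((Fintype.card F : ℝ) ^
                      (-|((((∑ i ∈ S, d i) + ∑ i ∈ Sᶜ, d i : ℤ)) : ℝ)| / 2)))) ∧
        ((∑ i ∈ S, d i) - ∑ i ∈ Sᶜ, d i < 0 → bS F S d = 0) := by
  classical
  refine ⟨1, ((KK k + 1 : ℕ) : ℝ), one_pos, by positivity, ?_⟩
  intro F _ _ S hS hSc d
  have hq : (1 : ℝ) ≤ Fintype.card F := by exact_mod_cast Fintype.card_pos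
  have hq0 : (0 : ℝ) < Fintype.card F := by linarith
  by_cases hsgn : (∃ i ∈ S, d i < 0) ∨ ∃ i ∉ S, 0 < d i
  · refine ⟨fun h0 => ?_, fun _ => bS_eq_zero S d hsgn⟩
    rw [bS_eq_zero S d hsgn, abs_zero]
    have : (0 : ℝ) ≤ ((1 + ((∑ i ∈ S, d i) - ∑ i ∈ Sᶜ, d i) : ℤ) : ℝ) := by
      exact_mod_cast (by omega)
    positivity
  push Not at hsgn
  obtain ⟨hp, hn⟩ := hsgn
  obtain ⟨n, rfl⟩ : ∃ n : Fin k →₀ ℕ, d = sg S n := by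
    refine ⟨Finsupp.equivFunOnFinite.symm fun i => (d i).natAbs, ?_⟩
    ext i
    simp only [sg, Finsupp.equivFunOnFinite_symm_apply_apply]
    split_ifs with hi
    · have := hp i hi; omega
    · have := hn i hi; omega
  obtain ⟨i₀, hi₀, hi₀'⟩ := Finset.exists_mem_eq_sup' hS (sg S n)
  obtain ⟨j₀, hj₀, hj₀'⟩ := Finset.exists_mem_eq_inf' hSc (sg S n)
  have hne : i₀ ≠ j₀ := by rintro rfl; exact Finset.mem_compl.1 hj₀ hi₀
  have g1 := bS_bd F hS Sᶜ (fun m hm => (Finset.mem_filter.1 hm).2.2.1) n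
  have g2 := bS_bd F hS S (fun m hm => (Finset.mem_filter.1 hm).2.1) n
  have g3 := bS_bd F hS ({i₀, j₀} : Finset (Fin k))ᶜ
    (fun m hm => (Finset.mem_filter.1 hm).2.2.2 i₀ hi₀ j₀ hj₀) n
  rw [compl_compl] at g1 g3
  rw [Finset.sum_pair hne] at g3
  have hD : (∑ i ∈ S, sg S n i) - ∑ i ∈ Sᶜ, sg S n i = n.degree := by
    rw [sum_sg_S, sum_sg_Sc, degree_split S n]; push_cast; ring
  have hsup : S.sup' hS (sg S n) = (n i₀ : ℤ) := by rw [hi₀']; simp [sg, hi₀]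
  have hinf : Sᶜ.inf' hSc (sg S n) = -(n j₀ : ℤ) := by
    rw [hj₀']; simp [sg, Finset.mem_compl.1 hj₀]
  refine ⟨fun _ => ?_, fun h => by rw [hD] at h; omega⟩
  rw [hD, hsup, hinf, sum_sg_S, sum_sg_Sc, one_mul, Real.rpow_natCast]
  have hdeg0 : (0 : ℝ) ≤ n.degree := Nat.cast_nonneg _
  have hpow : (1 + (n.degree : ℝ)) ^ KK k ≤ (((1 + (n.degree : ℤ)) : ℤ) : ℝ) ^ (KK k + 1) := by
    push_cast
    exact pow_le_pow_right₀ (by linarith) (Nat.le_succ _)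
  set A := ∑ i ∈ S, n i
  set B := ∑ i ∈ Sᶜ, n i
  have key : ∀ e e' : ℝ, e ≤ e' → |bS F S (sg S n)| ≤
      (1 + (n.degree : ℝ)) ^ (KK k) * (Fintype.card F : ℝ) ^ e → |bS F S (sg S n)| ≤
      (((1 + (n.degree : ℤ)) : ℤ) : ℝ) ^ (KK k + 1) * (Fintype.card F : ℝ) ^ e' := by
    intro e e' he h
    refine h.trans (mul_le_mul hpow (Real.rpow_le_rpow_of_exponent_le hq he)
      (Real.rpow_nonneg hq0.le _) ?_)
    push_cast
    positivity
  have hA0 : (0 : ℝ) ≤ A := Nat.cast_nonneg _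
  have hB0 : (0 : ℝ) ≤ B := Nat.cast_nonneg _
  have hmul : ∀ c x y : ℝ, 0 ≤ c → c * min x y = min (c * x) (c * y) := fun c x y hc =>
    mul_min_of_nonneg x y hc
  have hc : (0 : ℝ) ≤ (((1 + (n.degree : ℤ)) : ℤ) : ℝ) ^ (KK k + 1) := by
    push_cast
    positivity
  rw [hmul _ _ _ hc, hmul _ _ _ hc, hmul _ _ _ hc]
  refine le_min (le_min (key _ _ (le_of_eq ?_) g3) (key _ _ (le_of_eq ?_) g1))
    (le_min (key _ _ (le_of_eq ?_) g2) ?_)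
  · push_cast; ring
  · push_cast; ring
  · push_cast; ring
  · rcases le_total (A : ℝ) B with h | h
    · refine key _ _ ?_ g2
      push_cast
      rw [abs_of_nonpos (by linarith)]
      linarith
    · refine key _ _ ?_ g1
      push_cast
      rw [abs_of_nonneg (by linarith)]
      linarith

end
end
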